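/- arXiv:2109.00502 — 3 statements merged into one kernel-verified Lean document; each statement's English description precedes it below -/
import Mathlib

section
/- A bicrucial permutation of length n exists if and only if n = 9, or n is odd with n ≥ 13, or n is even with n ≥ 32 and n ≠ 38. -/
/-- The permutation `σ` of length `n` has a square starting at position `k`
with half-length `ℓ`: the factors `(σ k, …, σ (k+ℓ-1))` and
`(σ (k+ℓ), …, σ (k+2ℓ-1))` are order-isomorphic. -/
def HasSquareAt {n : ℕ} (σ : Fin n → Fin n) (k ℓ : ℕ) : Prop :=
  2 ≤ ℓ ∧ ∃ hb : k + 2 * ℓ ≤ n, ∀ (i j : ℕ) (hi : i < ℓ) (hj : j < ℓ),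
    (σ ⟨k + i, by omega⟩ < σ ⟨k + j, by omega⟩ ↔
      σ ⟨k + ℓ + i, by omega⟩ < σ ⟨k + ℓ + j, by omega⟩)

/-- `σ` contains a square. -/
def ContainsSquare {n : ℕ} (σ : Fin n → Fin n) : Prop :=
  ∃ k ℓ : ℕ, HasSquareAt σ k ℓ

/-- `σ` is square-free: it contains no square. -/
def SquareFree {n : ℕ} (σ : Fin n → Fin n) : Prop :=
  ¬ ContainsSquare σ

/-- `π` (of length `n+1`) is a right-extension of `σ` (of length `n`):
the prefix `(π 0, …, π (n-1))` is order-isomorphic to `σ`. -/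
def IsRightExtension {n : ℕ} (σ : Fin n → Fin n) (π : Fin (n + 1) → Fin (n + 1)) : Prop :=
  ∀ i j : Fin n, π i.castSucc < π j.castSucc ↔ σ i < σ j

/-- `π` (of length `n+1`) is a left-extension of `σ` (of length `n`):
the suffix `(π 1, …, π n)` is order-isomorphic to `σ`. -/
def IsLeftExtension {n : ℕ} (σ : Fin n → Fin n) (π : Fin (n + 1) → Fin (n + 1)) : Prop :=
  ∀ i j : Fin n, π i.succ < π j.succ ↔ σ i < σ j

/-- `σ` is right-crucial: square-free, and every right-extension contains a square. -/
def RightCrucial {n : ℕ} (σ : Equiv.Perm (Fin n)) : Prop :=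
  SquareFree ⇑σ ∧ ∀ π : Equiv.Perm (Fin (n + 1)), IsRightExtension ⇑σ ⇑π → ContainsSquare ⇑π

/-- `σ` is left-crucial: square-free, and every left-extension contains a square. -/
def LeftCrucial {n : ℕ} (σ : Equiv.Perm (Fin n)) : Prop :=
  SquareFree ⇑σ ∧ ∀ π : Equiv.Perm (Fin (n + 1)), IsLeftExtension ⇑σ ⇑π → ContainsSquare ⇑π

/-- `σ` is bicrucial: both left-crucial and right-crucial. -/
def Bicrucial {n : ℕ} (σ : Equiv.Perm (Fin n)) : Prop :=
  LeftCrucial σ ∧ RightCrucial σ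

namespace BC

/-- two consecutive blocks of length `l` starting at `k` are order-isomorphic -/
def Sq {α : Type*} [LinearOrder α] (v : ℕ → α) (k l : ℕ) : Prop :=
  ∀ i < l, ∀ j < l, (v (k + i) < v (k + j) ↔ v (k + l + i) < v (k + l + j))

/-- no squares inside the first `n` entries -/
def SF {α : Type*} [LinearOrder α] (v : ℕ → α) (n : ℕ) : Prop :=
  ∀ k l, 2 ≤ l → k + 2 * l ≤ n → ¬ Sq v k l

/-- every way to add an entry `y 0` in front of `y 1, …, y n` gives a square starting there;
`D` is the set of the indices whose entries lie below the new one -/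
def Crux {α : Type*} [LinearOrder α] (y : ℕ → α) (n : ℕ) : Prop :=
  ∀ D : ℕ → Prop,
    (∀ i j, 1 ≤ i → i ≤ n → 1 ≤ j → j ≤ n → D j → y i < y j → D i) →
    ∃ l, 2 ≤ l ∧ 2 * l ≤ n + 1 ∧
      (∀ i j, 1 ≤ i → i < l → 1 ≤ j → j < l → (y i < y j ↔ y (l + i) < y (l + j))) ∧
      (∀ i, 1 ≤ i → i < l → (D i ↔ y (l + i) < y l))

theorem Sq.rev {α : Type*} [LinearOrder α] {v w : ℕ → α} {N k l : ℕ}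
    (hw : ∀ i, k ≤ i → i < k + 2 * l → w i = v (N - i)) (hN : k + 2 * l ≤ N + 1)
    (h : Sq w k l) : Sq v (N + 1 - k - 2 * l) l := by
  intro i hi j hj
  have h1 := h (l - 1 - i) (by omega) (l - 1 - j) (by omega)
  rw [hw _ (by omega) (by omega), hw _ (by omega) (by omega), hw _ (by omega) (by omega),
    hw _ (by omega) (by omega)] at h1
  have e1 : N - (k + (l - 1 - i)) = N + 1 - k - 2 * l + l + i := by omega
  have e2 : N - (k + (l - 1 - j)) = N + 1 - k - 2 * l + l + j := by omega
  have e3 : N - (k + l + (l - 1 - i)) = N + 1 - k - 2 * l + i := by omega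
  have e4 : N - (k + l + (l - 1 - j)) = N + 1 - k - 2 * l + j := by omega
  rw [e1, e2, e3, e4] at h1
  exact h1.symm

structure Good (y : ℕ → ℤ) (n : ℕ) : Prop where
  inj : ∀ i j, 1 ≤ i → i ≤ n → 1 ≤ j → j ≤ n → y i = y j → i = j
  sf : ∀ k l, 1 ≤ k → 2 ≤ l → k + 2 * l ≤ n + 1 → ¬ Sq y k l
  cr : Crux y n
  cl : Crux (fun i => y (n + 1 - i)) n

theorem Crux.congr {α : Type*} [LinearOrder α] {y z : ℕ → α} {n : ℕ}
    (h : ∀ i, 1 ≤ i → i ≤ n → z i = y i) (hy : Crux y n) : Crux z n := by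
  intro D hD
  obtain ⟨l, h1, h2, h3, h4⟩ := hy D (by
    intro i j hi hi' hj hj' hd hlt
    refine hD i j hi hi' hj hj' hd ?_
    rw [h i hi hi', h j hj hj']; exact hlt)
  refine ⟨l, h1, h2, ?_, ?_⟩
  · intro i j hi hi' hj hj'
    rw [h i hi (by omega), h j hj (by omega), h (l + i) (by omega) (by omega),
      h (l + j) (by omega) (by omega)]
    exact h3 i j hi hi' hj hj'
  · intro i hi hi'
    rw [h (l + i) (by omega) (by omega), h l (by omega) (by omega)]
    exact h4 i hi hi'

theorem Good.rev {y : ℕ → ℤ} {n : ℕ} (h : Good y n) : Good (fun i => y (n + 1 - i)) n where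
  inj := by
    intro i j hi hi' hj hj' e
    have := h.inj (n + 1 - i) (n + 1 - j) (by omega) (by omega) (by omega) (by omega) e
    omega
  sf := by
    intro k l hk hl hkl hs
    exact h.sf _ l (by omega) hl (by omega)
      (Sq.rev (N := n + 1) (v := y) (fun i _ _ => rfl) (by omega) hs)
  cr := h.cl
  cl := by
    refine Crux.congr ?_ h.cr
    intro i hi hi'
    show y _ = y _
    congr 1
    omega

theorem Crux.neg {y : ℕ → ℤ} {n : ℕ}
    (inj : ∀ i j, 1 ≤ i → i ≤ n → 1 ≤ j → j ≤ n → y i = y j → i = j)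
    (h : Crux y n) : Crux (fun i => - y i) n := by
  intro D hD
  obtain ⟨l, h1, h2, h3, h4⟩ := h (fun i => ¬ D i) (by
    intro i j hi hi' hj hj' hd hlt hd'
    exact hd (hD j i hj hj' hi hi' hd' (by simpa using hlt)))
  refine ⟨l, h1, h2, ?_, ?_⟩
  · intro i j hi hi' hj hj'
    have := h3 j i hj hj' hi hi'
    simpa using this
  · intro i hi hi'
    have h5 := h4 i hi hi'
    have h6 := inj (l + i) l (by omega) (by omega) (by omega) (by omega)
    have h7 : y (l + i) ≠ y l := fun e => by have := h6 e; omega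
    show D i ↔ - y (l + i) < - y l
    constructor
    · intro hd
      by_contra h8
      exact (h5.2 (by omega)) hd
    · intro h8
      by_contra hd
      have := h5.1 hd
      omega

theorem Good.neg {y : ℕ → ℤ} {n : ℕ} (h : Good y n) : Good (fun i => - y i) n where
  inj := by
    intro i j hi hi' hj hj' e
    exact h.inj i j hi hi' hj hj' (by simpa using e)
  sf := by
    intro k l hk hl hkl hs
    refine h.sf k l hk hl hkl ?_
    intro i hi j hj
    have := hs j hj i hi
    simpa using this
  cr := h.cr.neg h.inj
  cl := by
    refine Crux.neg (y := fun i => y (n + 1 - i)) ?_ h.cl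
    exact h.rev.inj

theorem Good.ne {y : ℕ → ℤ} {n : ℕ} (h : Good y n) {i j : ℕ} (hi : 1 ≤ i) (hi' : i ≤ n)
    (hj : 1 ≤ j) (hj' : j ≤ n) (hij : i ≠ j) : y i ≠ y j :=
  fun e => hij (h.inj i j hi hi' hj hj' e)

theorem Good.dir {y : ℕ → ℤ} {n : ℕ} (h : Good y n) {i : ℕ} (hi : 1 ≤ i) (hi' : i + 3 ≤ n) :
    (y i < y (i + 1) ↔ ¬ y (i + 2) < y (i + 3)) := by
  have h1 := h.sf i 2 hi le_rfl (by omega)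
  have n1 := h.ne (i := i) (j := i + 1) (by omega) (by omega) (by omega) (by omega) (by omega)
  have n2 := h.ne (i := i + 2) (j := i + 3) (by omega) (by omega) (by omega) (by omega) (by omega)
  by_contra hc
  apply h1
  intro a ha b hb
  interval_cases a <;> interval_cases b <;> simp only [Nat.add_zero, Nat.add_assoc, Nat.reduceAdd] <;> omega

theorem Good.per {y : ℕ → ℤ} {n : ℕ} (h : Good y n) {i : ℕ} (hi : 1 ≤ i) (q : ℕ)
    (hi' : i + 4 * q + 1 ≤ n) :
    (y i < y (i + 1) ↔ y (i + 4 * q) < y (i + 4 * q + 1)) := by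
  induction q with
  | zero => simp
  | succ q ih =>
    rw [ih (by omega), h.dir (by omega) (by omega)]
    have := h.dir (i := i + 4 * q + 2) (by omega) (by omega)
    have e : i + 4 * (q + 1) = i + 4 * q + 2 + 2 := by ring
    rw [e]
    simp only [Nat.add_assoc, Nat.reduceAdd] at this ⊢
    tauto

theorem Good.crux4 {y : ℕ → ℤ} {n : ℕ} (h : Good y n) (hn : 3 ≤ n) (D : ℕ → Prop)
    (hD : ∀ i j, 1 ≤ i → i ≤ n → 1 ≤ j → j ≤ n → D j → y i < y j → D i)
    (hD1 : D 1 ↔ ¬ y 3 < y 2) :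
    ∃ m, 1 ≤ m ∧ 8 * m ≤ n + 1 ∧
      (∀ i j, 1 ≤ i → i < 4 * m → 1 ≤ j → j < 4 * m →
        (y i < y j ↔ y (4 * m + i) < y (4 * m + j))) ∧
      (∀ i, 1 ≤ i → i < 4 * m → (D i ↔ y (4 * m + i) < y (4 * m))) := by
  obtain ⟨l, h1, h2, h3, h4⟩ := h.cr D hD
  have hl : l ≠ 2 := by
    rintro rfl
    have := h4 1 (by omega) (by omega)
    simp only [Nat.reduceAdd] at this
    tauto
  have a1 := h3 1 2 (by omega) (by omega) (by omega) (by omega)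
  have a2 := h4 1 (by omega) (by omega)
  rw [hD1] at a2
  have n1 := h.ne (i := 2) (j := 3) (by omega) (by omega) (by omega) (by omega) (by omega)
  have n2 := h.ne (i := l) (j := l + 1) (by omega) (by omega) (by omega) (by omega) (by omega)
  have n3 := h.dir (i := 1) (by omega) (by omega)
  have n4 := h.dir (i := 2) (by omega) (by omega)
  simp only [Nat.reduceAdd] at n3 n4
  have hq : l = 4 * (l / 4) + l % 4 := by omega
  have hr : l % 4 < 4 := Nat.mod_lt _ (by norm_num)
  generalize l / 4 = q at hq
  generalize l % 4 = r at hq hr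
  interval_cases r
  · refine ⟨q, by omega, by omega, ?_, ?_⟩
    · intro i j
      have := h3 i j
      rw [hq] at this
      simpa using this
    · intro i
      have := h4 i
      rw [hq] at this
      simpa using this
  all_goals exfalso
  · have p1 := h.per (i := 1) (by omega) q (by omega)
    have p2 := h.per (i := 2) (by omega) q (by omega)
    rw [show 1 + 4 * q = l by omega] at p1
    rw [show 2 + 4 * q = l + 1 by omega] at p2
    simp only [Nat.reduceAdd, Nat.add_assoc] at p1 p2 a1 a2
    omega
  · have p1 := h.per (i := 2) (by omega) q (by omega)
    rw [show 2 + 4 * q = l by omega] at p1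
    simp only [Nat.reduceAdd, Nat.add_assoc] at p1 a1 a2
    omega
  · by_cases h5 : l = 3
    · subst h5
      simp only [Nat.reduceAdd] at *
      omega
    have p1 := h.per (i := 3) (by omega) q (by omega)
    have p2 := h.per (i := 4) (by omega) q (by omega)
    rw [show 3 + 4 * q = l by omega] at p1
    rw [show 4 + 4 * q = l + 1 by omega] at p2
    simp only [Nat.reduceAdd, Nat.add_assoc] at p1 p2 a1 a2
    omega


/-- the cut just above the entry with index `e` -/
theorem Good.above {y : ℕ → ℤ} {n : ℕ} (h : Good y n) (hn : 3 ≤ n) (h23 : y 2 < y 3) (e : ℕ)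
    (he : y 1 ≤ y e) :
    ∃ m, 1 ≤ m ∧ 8 * m ≤ n + 1 ∧
      (∀ i j, 1 ≤ i → i < 4 * m → 1 ≤ j → j < 4 * m →
        (y i < y j ↔ y (4 * m + i) < y (4 * m + j))) ∧
      (∀ i, 1 ≤ i → i < 4 * m → (y i ≤ y e ↔ y (4 * m + i) < y (4 * m))) := by
  apply h.crux4 hn (fun i => y i ≤ y e)
  · intro i j _ _ _ _ h1 h2
    exact le_trans h2.le h1
  · constructor
    · intro _; omega
    · intro _; exact he

/-- the cut just below the entry with index `e` -/
theorem Good.below {y : ℕ → ℤ} {n : ℕ} (h : Good y n) (hn : 3 ≤ n) (h23 : y 2 < y 3) (e : ℕ)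
    (he : y 1 < y e) :
    ∃ m, 1 ≤ m ∧ 8 * m ≤ n + 1 ∧
      (∀ i j, 1 ≤ i → i < 4 * m → 1 ≤ j → j < 4 * m →
        (y i < y j ↔ y (4 * m + i) < y (4 * m + j))) ∧
      (∀ i, 1 ≤ i → i < 4 * m → (y i < y e ↔ y (4 * m + i) < y (4 * m))) := by
  apply h.crux4 hn (fun i => y i < y e)
  · intro i j _ _ _ _ h1 h2
    exact lt_trans h2 h1
  · constructor
    · intro _; omega
    · intro _; exact he

/-- a monotone end `y 1 < y 2 < y 3` needs squares with half-lengths larger than 12 -/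
theorem Good.no_mono {y : ℕ → ℤ} {n : ℕ} (h : Good y n) (hn : 3 ≤ n) (hn' : n ≤ 30)
    (h12 : y 1 < y 2) (h23 : y 2 < y 3) : False := by
  obtain ⟨a, a1, a2, a3, a4⟩ := h.above hn h23 1 le_rfl
  obtain ⟨b, b1, b2, b3, b4⟩ := h.above hn h23 2 (by omega)
  obtain ⟨c, c1, c2, c3, c4⟩ := h.above hn h23 3 (by omega)
  have a5 := a4 2 (by omega) (by omega)
  have a6 := a4 3 (by omega) (by omega)
  have b5 := b4 2 (by omega) (by omega)
  have b6 := b4 3 (by omega) (by omega)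
  have c5 := c4 2 (by omega) (by omega)
  have c6 := c4 3 (by omega) (by omega)
  have a7 : a ≠ 2 ∨ ((y 4 < y 6 ↔ y 12 < y 14) ∧ (y 4 < y 7 ↔ y 12 < y 15)) := by
    refine or_iff_not_imp_left.2 fun h2 => ?_
    obtain rfl := not_not.1 h2
    exact ⟨a3 4 6 (by omega) (by omega) (by omega) (by omega),
      a3 4 7 (by omega) (by omega) (by omega) (by omega)⟩
  have b7 : b ≠ 2 ∨ ((y 4 < y 6 ↔ y 12 < y 14) ∧ (y 4 < y 7 ↔ y 12 < y 15)) := by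
    refine or_iff_not_imp_left.2 fun h2 => ?_
    obtain rfl := not_not.1 h2
    exact ⟨b3 4 6 (by omega) (by omega) (by omega) (by omega),
      b3 4 7 (by omega) (by omega) (by omega) (by omega)⟩
  have c7 : c ≠ 2 ∨ ((y 4 < y 6 ↔ y 12 < y 14) ∧ (y 4 < y 7 ↔ y 12 < y 15)) := by
    refine or_iff_not_imp_left.2 fun h2 => ?_
    obtain rfl := not_not.1 h2
    exact ⟨c3 4 6 (by omega) (by omega) (by omega) (by omega),
      c3 4 7 (by omega) (by omega) (by omega) (by omega)⟩
  clear a3 a4 b3 b4 c3 c4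
  have ha : a ≤ 3 := by omega
  have hb : b ≤ 3 := by omega
  have hc : c ≤ 3 := by omega
  have m1 : n < 15 ∨ y 4 ≠ y 6 := or_iff_not_imp_left.2 fun _ =>
    h.ne (by omega) (by omega) (by omega) (by omega) (by omega)
  have m2 : n < 15 ∨ y 12 ≠ y 14 := or_iff_not_imp_left.2 fun _ =>
    h.ne (by omega) (by omega) (by omega) (by omega) (by omega)
  have m3 : n < 15 ∨ y 4 ≠ y 7 := or_iff_not_imp_left.2 fun _ =>
    h.ne (by omega) (by omega) (by omega) (by omega) (by omega)
  have m4 : n < 15 ∨ y 12 ≠ y 15 := or_iff_not_imp_left.2 fun _ =>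
    h.ne (by omega) (by omega) (by omega) (by omega) (by omega)
  clear h
  interval_cases a <;> interval_cases b <;> interval_cases c <;>
    simp only [Nat.reduceMul, Nat.reduceAdd] at * <;> omega

theorem Good.step {y : ℕ → ℤ} {n : ℕ} (h : Good y n) (h12 : y 1 < y 2) (h23 : y 2 < y 3)
    (t : ℕ) (hn : 4 * t + 8 ≤ n) :
    y (4 * t + 1) < y (4 * t + 2) ∧ y (4 * t + 2) < y (4 * t + 3) ∧ y (4 * t + 4) < y (4 * t + 3) ∧
      y (4 * t + 5) < y (4 * t + 4) := by
  have p1 := h.per (i := 1) (by omega) t (by omega)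
  have p2 := h.per (i := 2) (by omega) t (by omega)
  have d1 := h.dir (i := 4 * t + 1) (by omega) (by omega)
  have d2 := h.dir (i := 4 * t + 2) (by omega) (by omega)
  have n3 := h.ne (i := 4 * t + 3) (j := 4 * t + 4)
    (by omega) (by omega) (by omega) (by omega) (by omega)
  have n4 := h.ne (i := 4 * t + 4) (j := 4 * t + 5)
    (by omega) (by omega) (by omega) (by omega) (by omega)
  rw [show 1 + 4 * t = 4 * t + 1 by omega] at p1
  rw [show 2 + 4 * t = 4 * t + 2 by omega] at p2
  simp only [Nat.add_assoc, Nat.reduceAdd] at p1 p2 d1 d2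
  omega

theorem Good.sq4 {y : ℕ → ℤ} {n : ℕ} (h : Good y n) (k : ℕ) (hk : 1 ≤ k) (hn : k + 7 ≤ n) :
    ¬ ∀ i < 4, ∀ j < 4, (y (k + i) < y (k + j) ↔ y (k + 4 + i) < y (k + 4 + j)) := by
  exact h.sf k 4 hk (by omega) (by omega)

/-- in the monotone normal form two consecutive middle entries cannot both be large … -/
theorem Good.notUU {y : ℕ → ℤ} {n : ℕ} (h : Good y n) (h12 : y 1 < y 2) (h23 : y 2 < y 3)
    (t : ℕ) (hn : 4 * t + 16 ≤ n) (h1 : y (4 * t + 6) < y (4 * t + 4))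
    (h2 : y (4 * t + 10) < y (4 * t + 8)) : False := by
  have s1 := h.step h12 h23 t (by omega)
  have s2 := h.step h12 h23 (t + 1) (by omega)
  have s3 := h.step h12 h23 (t + 2) (by omega)
  simp only [Nat.mul_add, Nat.add_assoc, Nat.reduceMul, Nat.reduceAdd] at s1 s2 s3
  apply h.sq4 (4 * t + 3) (by omega) (by omega)
  intro i hi j hj
  interval_cases i <;> interval_cases j <;>
    simp only [Nat.add_assoc, Nat.reduceAdd, Nat.add_zero] <;> omega

/-- … nor both be small. -/
theorem Good.notDD {y : ℕ → ℤ} {n : ℕ} (h : Good y n) (h12 : y 1 < y 2) (h23 : y 2 < y 3)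
    (t : ℕ) (hn : 4 * t + 12 ≤ n) (h1 : y (4 * t + 4) < y (4 * t + 6))
    (h2 : y (4 * t + 8) < y (4 * t + 10)) (h3 : y (4 * t + 9) < y (4 * t + 10))
    (h4 : y (4 * t + 10) < y (4 * t + 11)) : False := by
  have s1 := h.step h12 h23 t (by omega)
  have s2 := h.step h12 h23 (t + 1) (by omega)
  simp only [Nat.mul_add, Nat.add_assoc, Nat.reduceMul, Nat.reduceAdd] at s1 s2
  apply h.sq4 (4 * t + 4) (by omega) (by omega)
  intro i hi j hj
  interval_cases i <;> interval_cases j <;>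
    simp only [Nat.add_assoc, Nat.reduceAdd, Nat.add_zero] <;> omega

/-- short odd lengths: only squares with half-length 4 are available -/
theorem Good.short {y : ℕ → ℤ} {n : ℕ} (h : Good y n) (hn : 3 ≤ n) (hn' : n ≤ 14)
    (h12 : y 1 < y 2) : 7 ≤ n ∧ y 3 < y 2 ∧ y 1 < y 3 ∧ y 5 < y 7 := by
  have h32 : y 3 < y 2 := by
    by_contra h'
    have := h.ne (i := 2) (j := 3) (by omega) (by omega) (by omega) (by omega) (by omega)
    exact h.no_mono hn (by omega) h12 (by omega)
  obtain ⟨a, a1, a2, a3, a4⟩ := h.crux4 hn (fun i => False) (by tauto) (by tauto)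
  obtain ⟨b, b1, b2, b3, b4⟩ := h.crux4 hn (fun i => y i < y 1)
    (by intro i j _ _ _ _ h1 h2; exact lt_trans h2 h1) (by simp; exact h32)
  have ha : a = 1 := by omega
  have hb : b = 1 := by omega
  subst ha hb
  have a5 := a4 3 (by omega) (by omega)
  have b5 := b4 3 (by omega) (by omega)
  have a6 := a3 1 3 (by omega) (by omega) (by omega) (by omega)
  have := h.ne (i := 1) (j := 3) (by omega) (by omega) (by omega) (by omega) (by omega)
  simp only [Nat.reduceMul, Nat.reduceAdd, false_iff] at *
  omega

theorem no7 {y : ℕ → ℤ} (h : Good y 7) (h12 : y 1 < y 2) : False := by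
  have s1 := h.short (by omega) (by omega) h12
  have d1 := h.dir (i := 2) (by omega) (by omega)
  have d2 := h.dir (i := 4) (by omega) (by omega)
  have n2 := h.ne (i := 6) (j := 7) (by omega) (by omega) (by omega) (by omega) (by omega)
  have s2 := h.rev.short (by omega) (by omega) (by
    simp only [Nat.reduceAdd, Nat.reduceSub] at *
    omega)
  simp only [Nat.reduceAdd, Nat.reduceSub] at *
  omega

theorem no11 {y : ℕ → ℤ} (h : Good y 11) (h12 : y 1 < y 2) : False := by
  have s1 := h.short (by omega) (by omega) h12
  have d1 := h.per (i := 2) (by omega) 2 (by omega)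
  have n2 := h.ne (i := 10) (j := 11) (by omega) (by omega) (by omega) (by omega) (by omega)
  have s2 := h.rev.short (by omega) (by omega) (by
    simp only [Nat.reduceAdd, Nat.reduceSub, Nat.reduceMul] at *
    omega)
  simp only [Nat.reduceAdd, Nat.reduceSub, Nat.reduceMul] at *
  omega

theorem no_tiny {y : ℕ → ℤ} {n : ℕ} (hn : n < 7) (h : Good y n) : False := by
  by_cases h3 : n < 3
  · obtain ⟨l, h1, h2, _⟩ := h.cr (fun _ => False) (by tauto)
    omega
  · obtain ⟨a, a1, a2, a3, a4⟩ := h.crux4 (by omega) (fun i => ¬ y 3 < y 2) (by tauto) (by tauto)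
    omega

set_option maxHeartbeats 4000000 in
theorem no38 {y : ℕ → ℤ} (h : Good y 38) (h12 : y 1 < y 2) (h23 : y 2 < y 3) : False := by
  -- the classes of the middle entries
  have u4 := h.notUU h12 h23 0 (by omega)
  have u8 := h.notUU h12 h23 1 (by omega)
  have u12 := h.notUU h12 h23 2 (by omega)
  have e8 : (∀ i j, 1 ≤ i → i < 8 → 1 ≤ j → j < 8 → (y i < y j ↔ y (8 + i) < y (8 + j))) ∧
      (∀ i j, 1 ≤ i → i < 16 → 1 ≤ j → j < 16 → (y i < y j ↔ y (16 + i) < y (16 + j))) ∧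
      (y 4 < y 6 ∧ y 12 < y 14 ∧ y 10 < y 8 ∧ y 18 < y 16 ∧
        (y 11 < y 8 ↔ ¬ y 19 < y 16)) := by
    obtain ⟨a, a1, a2, a3, a4⟩ := h.above (by omega) h23 1 le_rfl
    obtain ⟨b, b1, b2, b3, b4⟩ := h.above (by omega) h23 2 (by omega)
    obtain ⟨c, c1, c2, c3, c4⟩ := h.above (by omega) h23 3 (by omega)
    have a5 := a4 2 (by omega) (by omega)
    have a6 := a4 3 (by omega) (by omega)
    have b5 := b4 2 (by omega) (by omega)
    have b6 := b4 3 (by omega) (by omega)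
    have c5 := c4 2 (by omega) (by omega)
    have c6 := c4 3 (by omega) (by omega)
    have k8 : ∀ m, (∀ i j, 1 ≤ i → i < 4 * m → 1 ≤ j → j < 4 * m →
        (y i < y j ↔ y (4 * m + i) < y (4 * m + j))) → m ≠ 2 ∨
        ((y 4 < y 6 ↔ y 12 < y 14) ∧ (y 7 < y 4 ↔ y 15 < y 12)) := by
      intro m hm
      refine or_iff_not_imp_left.2 fun h2 => ?_
      obtain rfl := not_not.1 h2
      exact ⟨hm 4 6 (by omega) (by omega) (by omega) (by omega),
        hm 7 4 (by omega) (by omega) (by omega) (by omega)⟩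
    have k12 : ∀ m, (∀ i j, 1 ≤ i → i < 4 * m → 1 ≤ j → j < 4 * m →
        (y i < y j ↔ y (4 * m + i) < y (4 * m + j))) → m ≠ 3 ∨
        ((y 4 < y 6 ↔ y 16 < y 18) ∧ (y 7 < y 4 ↔ y 19 < y 16)) := by
      intro m hm
      refine or_iff_not_imp_left.2 fun h2 => ?_
      obtain rfl := not_not.1 h2
      exact ⟨hm 4 6 (by omega) (by omega) (by omega) (by omega),
        hm 7 4 (by omega) (by omega) (by omega) (by omega)⟩
    have a8 := k8 a a3
    have b8 := k8 b b3
    have c8 := k8 c c3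
    have a12 := k12 a a3
    have b12 := k12 b b3
    have c12 := k12 c c3
    have n1 := h.ne (i := 4) (j := 6) (by omega) (by omega) (by omega) (by omega) (by omega)
    have n2 := h.ne (i := 8) (j := 10) (by omega) (by omega) (by omega) (by omega) (by omega)
    have n3 := h.ne (i := 12) (j := 14) (by omega) (by omega) (by omega) (by omega) (by omega)
    have n4 := h.ne (i := 16) (j := 18) (by omega) (by omega) (by omega) (by omega) (by omega)
    simp only [Nat.reduceMul, Nat.reduceAdd, Nat.zero_add] at u4 u8 u12
    have key : ((b = 2 ∧ c = 4) ∨ (b = 4 ∧ c = 2)) ∧ (y 4 < y 6 ∧ y 12 < y 14 ∧ y 10 < y 8 ∧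
        y 18 < y 16 ∧ (y 11 < y 8 ↔ ¬ y 19 < y 16)) := by
      clear a3 a4 b3 b4 c3 c4 k8 k12
      have ha : a ≤ 4 := by omega
      have hb : b ≤ 4 := by omega
      have hc : c ≤ 4 := by omega
      have w4 : ¬ (y 6 < y 4 ∧ y 10 < y 8) := fun x => u4 x.1 x.2
      have w8 : ¬ (y 10 < y 8 ∧ y 14 < y 12) := fun x => u8 x.1 x.2
      have w12 : ¬ (y 14 < y 12 ∧ y 18 < y 16) := fun x => u12 x.1 x.2
      clear u4 u8 u12
      have a5' : ¬ y (4 * a + 2) < y (4 * a) := fun h' => by have := a5.2 h'; omega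
      have b5' : y (4 * b + 2) < y (4 * b) := b5.1 le_rfl
      have b6' : ¬ y (4 * b + 3) < y (4 * b) := fun h' => by have := b6.2 h'; omega
      have c5' : y (4 * c + 2) < y (4 * c) := c5.1 h23.le
      have c6' : y (4 * c + 3) < y (4 * c) := c6.1 le_rfl
      clear a5 a6 b5 b6 c5 c6 h12 h23
      have hbc : b ≠ c := by rintro rfl; exact b6' c6'
      have hbc : (b = 1 ∧ c = 3) ∨ (b = 3 ∧ c = 1) ∨ (b = 1 ∧ c = 4) ∨ (b = 4 ∧ c = 1) ∨
          (b = 2 ∧ c = 4) ∨ (b = 4 ∧ c = 2) := by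
        clear a5' b6' c6' a8 b8 c8 a12 b12 c12 n1 n2 n3 n4 h
        interval_cases b <;> interval_cases c <;>
          simp only [Nat.reduceMul, Nat.reduceAdd] at b5' c5' <;> omega
      clear h
      rcases hbc with ⟨rfl, rfl⟩ | ⟨rfl, rfl⟩ | ⟨rfl, rfl⟩ | ⟨rfl, rfl⟩ | ⟨rfl, rfl⟩ | ⟨rfl, rfl⟩
      all_goals simp only [Nat.reduceMul, Nat.reduceAdd] at b5' b6' c5' c6'
      · exfalso; interval_cases a <;>
          simp only [Nat.reduceMul, Nat.reduceAdd] at a5' <;> omega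
      · exfalso; interval_cases a <;>
          simp only [Nat.reduceMul, Nat.reduceAdd] at a5' <;> omega
      · exfalso; interval_cases a <;>
          simp only [Nat.reduceMul, Nat.reduceAdd] at a5' <;> omega
      · exfalso; interval_cases a <;>
          simp only [Nat.reduceMul, Nat.reduceAdd] at a5' <;> omega
      · clear a5' a8 a12 b8 c8 b12 c12
        omega
      · clear a5' a8 a12 b8 c8 b12 c12
        omega
    refine ⟨?_, ?_, key.2⟩
    · rcases key.1 with ⟨rfl, rfl⟩ | ⟨rfl, rfl⟩
      · exact b3
      · exact c3
    · rcases key.1 with ⟨rfl, rfl⟩ | ⟨rfl, rfl⟩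
      · exact c3
      · exact b3
  obtain ⟨e8, e16, x4, x12, x8, x16, x⟩ := e8
  have h72 : y 7 < y 2 := by
    by_contra h72
    have n1 := h.ne (i := 2) (j := 7) (by omega) (by omega) (by omega) (by omega) (by omega)
    have n2 := h.ne (i := 3) (j := 7) (by omega) (by omega) (by omega) (by omega) (by omega)
    obtain ⟨a, a1, a2, a3, a4⟩ := h.above (by omega) h23 7 (by omega)
    obtain ⟨b, b1, b2, b3, b4⟩ := h.below (by omega) h23 7 (by omega)
    have a5 := a4 2 (by omega) (by omega)
    have a6 := a4 3 (by omega) (by omega)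
    have b5 := b4 2 (by omega) (by omega)
    have b6 := b4 3 (by omega) (by omega)
    have ha1 : a ≠ 1 := by
      rintro rfl
      have := a5.1 (by omega)
      simp only [Nat.reduceMul, Nat.reduceAdd] at this
      omega
    have hb1 : b ≠ 1 := by
      rintro rfl
      have := b5.1 (by omega)
      simp only [Nat.reduceMul, Nat.reduceAdd] at this
      omega
    have a7 := a4 7 (by omega) (by omega)
    have b7 := b4 7 (by omega) (by omega)
    have ha : a = 2 ∨ a = 3 ∨ a = 4 := by omega
    have hb : b = 2 ∨ b = 3 ∨ b = 4 := by omega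
    clear a3 a4 b3 b4 e8 e16 u4 u8 u12 h
    rcases ha with rfl | rfl | rfl <;> rcases hb with rfl | rfl | rfl <;>
        simp only [Nat.reduceMul, Nat.reduceAdd] at a5 a6 a7 b5 b6 b7 <;> omega
  have f1 : y 15 < y 10 := (e8 7 2 (by omega) (by omega) (by omega) (by omega)).1 h72
  have f2 : y 31 < y 26 := (e16 15 10 (by omega) (by omega) (by omega) (by omega)).1 f1
  have f3 : y 23 < y 18 := (e16 7 2 (by omega) (by omega) (by omega) (by omega)).1 h72
  have f4 : y 28 < y 30 := (e16 12 14 (by omega) (by omega) (by omega) (by omega)).1 x12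
  have f5 : y 26 < y 24 := (e16 10 8 (by omega) (by omega) (by omega) (by omega)).1 x8
  have f6 : y 20 < y 22 := (e16 4 6 (by omega) (by omega) (by omega) (by omega)).1 x4
  have p1 := h.per (i := 1) (by omega) 8 (by omega)
  have p2 := h.per (i := 2) (by omega) 8 (by omega)
  have p3 := h.per (i := 1) (by omega) 9 (by omega)
  have d3 := h.dir (i := 34) (by omega) (by omega)
  have n3 := h.ne (i := 36) (j := 37) (by omega) (by omega) (by omega) (by omega) (by omega)
  have d4 := h.dir (i := 32) (by omega) (by omega)
  have n5 := h.ne (i := 32) (j := 34) (by omega) (by omega) (by omega) (by omega) (by omega)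
  have n6 := h.ne (i := 36) (j := 38) (by omega) (by omega) (by omega) (by omega) (by omega)
  have g := h.notDD h12 h23 6 (by omega) f4
  simp only [Nat.reduceMul, Nat.reduceAdd] at p1 p2 p3 d3 d4 g
  have g2 : y 34 < y 32 := by
    by_contra g'
    exact g (by omega) (by omega) (by omega)
  -- the other end
  have z23 : (fun i => y (38 + 1 - i)) 2 < (fun i => y (38 + 1 - i)) 3 := by
    show y 37 < y 36
    omega
  obtain ⟨a, a1, a2, a3, a4⟩ := h.rev.crux4 (by omega) (fun _ => True)
    (fun _ _ _ _ _ _ _ _ => trivial) (by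
    simp only [true_iff, not_lt]; exact z23.le)
  obtain ⟨b, b1, b2, b3, b4⟩ := h.rev.above (by omega) z23 1 le_rfl
  clear e8 e16 u4 u8 u12
  have a6 : a ≠ 1 → _ := fun _ => a3 5 7 (by omega) (by omega) (by omega) (by omega)
  have a7 : a ≠ 1 → _ := fun _ => a4 5 (by omega) (by omega)
  have a8 := a3 1 3 (by omega) (by omega) (by omega) (by omega)
  have a9 := a4 3 (by omega) (by omega)
  have b5 := b3 1 3 (by omega) (by omega) (by omega) (by omega)
  have b6 : b ≠ 1 → _ := fun _ => b3 5 7 (by omega) (by omega) (by omega) (by omega)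
  have b7 := b4 3 (by omega) (by omega)
  have ha : a ≤ 4 := by omega
  have hb : b ≤ 4 := by omega
  clear a3 a4 b3 b4
  interval_cases b <;> interval_cases a <;>
        simp only [Nat.reduceMul, Nat.reduceAdd, Nat.reduceSub, true_iff] at * <;> omega

/-- no bicrucial permutation for the excluded lengths -/
theorem Good.length {y : ℕ → ℤ} {n : ℕ} (h : Good y n) :
    n = 9 ∨ (Odd n ∧ 13 ≤ n) ∨ (Even n ∧ 32 ≤ n ∧ n ≠ 38) := by
  by_contra hc
  have hn7 : ¬ n < 7 := fun h' => no_tiny h' h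
  rcases Nat.even_or_odd n with he | ho
  · -- even length: one of the two ends is monotone
    have hn : n ≤ 30 ∨ n = 38 := by
      by_contra h'
      apply hc
      right; right
      refine ⟨he, ?_, by omega⟩
      obtain ⟨r, hr⟩ := he
      omega
    have main : ∀ z : ℕ → ℤ, Good z n → z 1 < z 2 → z 2 < z 3 → False := by
      intro z hz h12 h23
      rcases hn with hn | rfl
      · exact hz.no_mono (by omega) hn h12 h23
      · exact no38 hz h12 h23
    have main2 : ∀ z : ℕ → ℤ, Good z n → (z 1 < z 2 ↔ z 2 < z 3) → False := by
      intro z hz hiff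
      have n1 := hz.ne (i := 1) (j := 2) (by omega) (by omega) (by omega) (by omega) (by omega)
      have n2 := hz.ne (i := 2) (j := 3) (by omega) (by omega) (by omega) (by omega) (by omega)
      by_cases h12 : z 1 < z 2
      · exact main z hz h12 (hiff.1 h12)
      · refine main _ hz.neg ?_ ?_
        · show - z 1 < - z 2
          omega
        · show - z 2 < - z 3
          omega
    by_cases hiff : (y 1 < y 2 ↔ y 2 < y 3)
    · exact main2 y h hiff
    · refine main2 _ h.rev ?_
      show y (n + 1 - 1) < y (n + 1 - 2) ↔ y (n + 1 - 2) < y (n + 1 - 3)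
      have n1 := h.ne (i := n + 1 - 1) (j := n + 1 - 2)
        (by omega) (by omega) (by omega) (by omega) (by omega)
      have n2 := h.ne (i := n + 1 - 2) (j := n + 1 - 3)
        (by omega) (by omega) (by omega) (by omega) (by omega)
      obtain ⟨r, hr⟩ := he
      have d1 := h.dir (i := 1) (by omega) (by omega)
      have d2 := h.dir (i := 2) (by omega) (by omega)
      obtain ⟨q, hq | hq⟩ : ∃ q, n = 4 * q + 4 ∨ n = 4 * q + 6 := ⟨(n - 4) / 4, by omega⟩
      · have p2 := h.per (i := 2) (by omega) q (by omega)
        have p3 := h.per (i := 3) (by omega) q (by omega)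
        rw [show n + 1 - 1 = 3 + 4 * q + 1 by omega, show n + 1 - 2 = 3 + 4 * q by omega,
          show n + 1 - 3 = 2 + 4 * q by omega] at *
        rw [show 2 + 4 * q + 1 = 3 + 4 * q by omega] at *
        simp only [Nat.reduceAdd] at *
        omega
      · have p2 := h.per (i := 4) (by omega) q (by omega)
        have p3 := h.per (i := 5) (by omega) q (by omega)
        have d3 := h.dir (i := 3) (by omega) (by omega)
        rw [show n + 1 - 1 = 5 + 4 * q + 1 by omega, show n + 1 - 2 = 5 + 4 * q by omega,
          show n + 1 - 3 = 4 + 4 * q by omega] at *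
        rw [show 4 + 4 * q + 1 = 5 + 4 * q by omega] at *
        simp only [Nat.reduceAdd] at *
        omega
  · have hn : n = 7 ∨ n = 11 := by
      by_contra h'
      obtain ⟨r, hr⟩ := id ho
      have : ¬ 13 ≤ n := fun h'' => hc (Or.inr (Or.inl ⟨ho, h''⟩))
      have : n ≠ 9 := fun h'' => hc (Or.inl h'')
      omega
    have main : ∀ z : ℕ → ℤ, Good z n → z 1 < z 2 → False := by
      intro z hz h12
      rcases hn with rfl | rfl
      · exact no7 hz h12
      · exact no11 hz h12
    have n1 := h.ne (i := 1) (j := 2) (by omega) (by omega) (by omega) (by omega) (by omega)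
    by_cases h12 : y 1 < y 2
    · exact main y h h12
    · exact main _ h.neg (by show - y 1 < - y 2; omega)

end BC
namespace BC

theorem exists_rank {α : Type*} [LinearOrder α] {m : ℕ} (w : Fin m → α)
    (hw : Function.Injective w) :
    ∃ π : Equiv.Perm (Fin m), ∀ i j, π i < π j ↔ w i < w j := by
  classical
  have hc : (Finset.univ.image w).card = m := by
    rw [Finset.card_image_of_injective _ hw]; simp
  let e := (Finset.univ.image w).orderIsoOfFin hc
  let f : Fin m → Fin m := fun i => e.symm ⟨w i, by simp⟩
  have hf : ∀ i j, f i < f j ↔ w i < w j := by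
    intro i j
    simp only [f, OrderIso.lt_iff_lt, Subtype.mk_lt_mk]
  have hinj : Function.Injective f := by
    intro i j hij
    have := e.symm.injective hij
    exact hw (by simpa using this)
  refine ⟨Equiv.ofBijective f ((Fintype.bijective_iff_injective_and_card f).2 ⟨hinj, rfl⟩), ?_⟩
  intro i j
  exact hf i j

theorem hasSquareAt_iff {α : Type*} [LinearOrder α] {n : ℕ} {σ : Fin n → Fin n} {v : ℕ → α}
    (hv : ∀ i j (hi : i < n) (hj : j < n), σ ⟨i, hi⟩ < σ ⟨j, hj⟩ ↔ v i < v j) (k l : ℕ) :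
    HasSquareAt σ k l ↔ 2 ≤ l ∧ k + 2 * l ≤ n ∧ Sq v k l := by
  constructor
  · rintro ⟨h1, h2, h3⟩
    refine ⟨h1, h2, ?_⟩
    intro i hi j hj
    rw [← hv _ _ (by omega) (by omega), ← hv _ _ (by omega) (by omega)]
    exact h3 i j hi hj
  · rintro ⟨h1, h2, h3⟩
    refine ⟨h1, h2, ?_⟩
    intro i j hi hj
    rw [hv _ _ (by omega) (by omega), hv _ _ (by omega) (by omega)]
    exact h3 i hi j hj

theorem squareFree_iff {α : Type*} [LinearOrder α] {n : ℕ} {σ : Fin n → Fin n} {v : ℕ → α}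
    (hv : ∀ i j (hi : i < n) (hj : j < n), σ ⟨i, hi⟩ < σ ⟨j, hj⟩ ↔ v i < v j) :
    SquareFree σ ↔ SF v n := by
  constructor
  · intro h k l h1 h2 h3
    exact h ⟨k, l, (hasSquareAt_iff hv k l).2 ⟨h1, h2, h3⟩⟩
  · rintro h ⟨k, l, h3⟩
    rw [hasSquareAt_iff hv] at h3
    exact h k l h3.1 h3.2.1 h3.2.2

theorem sq_of_crux {α : Type*} [LinearOrder α] {y : ℕ → α} {z : ℕ → ℕ} {n : ℕ}
    (inj : ∀ i j, i ≤ n → j ≤ n → z i = z j → i = j)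
    (hz : ∀ i j, 1 ≤ i → i ≤ n → 1 ≤ j → j ≤ n → (z i < z j ↔ y i < y j))
    (h : Crux y n) : ∃ l, 2 ≤ l ∧ 2 * l ≤ n + 1 ∧ Sq z 0 l := by
  obtain ⟨l, h1, h2, h3, h4⟩ := h (fun i => z i < z 0) (by
    intro i j hi hi' hj hj' hd hlt
    rw [← hz i j hi hi' hj hj'] at hlt
    exact lt_trans hlt hd)
  refine ⟨l, h1, h2, ?_⟩
  have h5 : ∀ i, 1 ≤ i → i < l → (z i < z 0 ↔ z (l + i) < z l) := by
    intro i hi hi'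
    rw [hz (l + i) l (by omega) (by omega) (by omega) (by omega)]
    exact h4 i hi hi'
  intro i hi j hj
  simp only [Nat.zero_add]
  rcases Nat.eq_zero_or_pos i with rfl | hi0
  · rcases Nat.eq_zero_or_pos j with rfl | hj0
    · simp
    · have h6 := h5 j hj0 hj
      have n1 : z j ≠ z 0 := fun e => by have := inj _ _ (by omega) (by omega) e; omega
      have n2 : z (l + j) ≠ z l := fun e => by have := inj _ _ (by omega) (by omega) e; omega
      simp only [Nat.add_zero]
      omega
  · rcases Nat.eq_zero_or_pos j with rfl | hj0
    · exact h5 i hi0 hi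
    · rw [hz i j hi0 (by omega) hj0 (by omega),
        hz (l + i) (l + j) (by omega) (by omega) (by omega) (by omega)]
      exact h3 i j hi0 hi hj0 hj

theorem crux_of_sq {y : ℕ → ℕ} {n : ℕ}
    (inj : ∀ i j, 1 ≤ i → i ≤ n → 1 ≤ j → j ≤ n → y i = y j → i = j)
    (h : ∀ z : ℕ → ℕ, (∀ i j, i ≤ n → j ≤ n → z i = z j → i = j) →
      (∀ i j, 1 ≤ i → i ≤ n → 1 ≤ j → j ≤ n → (z i < z j ↔ y i < y j)) →
      ∃ l, 2 ≤ l ∧ 2 * l ≤ n + 1 ∧ Sq z 0 l) : Crux y n := by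
  classical
  intro D hD
  let c : ℕ := ((Finset.Icc 1 n).filter D).sup (fun i => 2 * y i + 3)
  have hc : ∀ i, 1 ≤ i → i ≤ n → D i → 2 * y i + 3 ≤ c := by
    intro i hi hi' hd
    exact Finset.le_sup (f := fun i => 2 * y i + 3) (by simp [hi, hi', hd])
  have hc' : ∀ i, 1 ≤ i → i ≤ n → ¬ D i → c < 2 * y i + 2 := by
    intro i hi hi' hd
    rw [Finset.sup_lt_iff (by simp)]
    intro j hj
    simp only [Finset.mem_filter, Finset.mem_Icc] at hj
    have h1 : ¬ y i < y j := fun h' => hd (hD i j hi hi' hj.1.1 hj.1.2 hj.2 h')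
    have h2 : y i ≠ y j := fun e => by
      have := inj _ _ hi hi' hj.1.1 hj.1.2 e
      subst this
      exact hd hj.2
    omega
  obtain ⟨l, h1, h2, h3⟩ := h (fun i => if i = 0 then c else 2 * y i + 2) (by
    intro i j hi hj e
    rcases Nat.eq_zero_or_pos i with rfl | hi0
    · rcases Nat.eq_zero_or_pos j with rfl | hj0
      · rfl
      · simp only [if_true, if_neg (show j ≠ 0 by omega)] at e
        by_cases hd : D j
        · have := hc j hj0 hj hd; omega
        · have := hc' j hj0 hj hd; omega
    · rcases Nat.eq_zero_or_pos j with rfl | hj0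
      · simp only [if_true, if_neg (show i ≠ 0 by omega)] at e
        by_cases hd : D i
        · have := hc i hi0 hi hd; omega
        · have := hc' i hi0 hi hd; omega
      · simp only [if_neg (show i ≠ 0 by omega), if_neg (show j ≠ 0 by omega)] at e
        exact inj i j hi0 hi hj0 hj (by omega)) (by
    intro i j hi hi' hj hj'
    simp only [if_neg (show i ≠ 0 by omega), if_neg (show j ≠ 0 by omega)]
    omega)
  refine ⟨l, h1, h2, ?_, ?_⟩
  · intro i j hi hi' hj hj'
    have := h3 i hi' j hj'
    simp only [Nat.zero_add, if_neg (show i ≠ 0 by omega), if_neg (show j ≠ 0 by omega),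
      if_neg (show l + i ≠ 0 by omega), if_neg (show l + j ≠ 0 by omega)] at this
    omega
  · intro i hi hi'
    have h5 := h3 i hi' 0 (by omega)
    simp only [Nat.zero_add, Nat.add_zero, if_true, if_neg (show i ≠ 0 by omega),
      if_neg (show l + i ≠ 0 by omega), if_neg (show l ≠ 0 by omega)] at h5
    by_cases hd : D i
    · have := hc i hi (by omega) hd
      simp only [hd, true_iff]
      omega
    · have := hc' i hi (by omega) hd
      simp only [hd, false_iff]
      omega

/-- the values of a permutation as a sequence indexed by `ℕ` -/
def seq {n : ℕ} (σ : Equiv.Perm (Fin n)) (i : ℕ) : ℕ := if h : i < n then (σ ⟨i, h⟩ : ℕ) else 0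

theorem seq_lt {n : ℕ} (σ : Equiv.Perm (Fin n)) :
    ∀ i j (hi : i < n) (hj : j < n), σ ⟨i, hi⟩ < σ ⟨j, hj⟩ ↔ seq σ i < seq σ j := by
  intro i j hi hj
  simp only [seq, hi, hj, dif_pos, Fin.lt_def]

theorem seq_inj {n : ℕ} (σ : Equiv.Perm (Fin n)) {i j : ℕ} (hi : i < n) (hj : j < n)
    (h : seq σ i = seq σ j) : i = j := by
  simp only [seq, hi, hj, dif_pos] at h
  have := σ.injective (Fin.ext h)
  simpa using this

theorem exists_of_seq {α : Type*} [LinearOrder α] {v : ℕ → α} {n : ℕ}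
    (inj : ∀ i j, i < n → j < n → v i = v j → i = j) (sf : SF v n)
    (cl : Crux (fun i => v (i - 1)) n) (cr : Crux (fun i => v (n - i)) n) :
    ∃ σ : Equiv.Perm (Fin n), Bicrucial σ := by
  obtain ⟨σ, hσ⟩ := exists_rank (fun i : Fin n => v i) (by
    intro i j e
    exact Fin.ext (inj i j i.2 j.2 e))
  have hv : ∀ i j (hi : i < n) (hj : j < n), σ ⟨i, hi⟩ < σ ⟨j, hj⟩ ↔ v i < v j :=
    fun i j hi hj => hσ ⟨i, hi⟩ ⟨j, hj⟩
  have hsf : SquareFree ⇑σ := (squareFree_iff hv).2 sf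
  refine ⟨σ, ⟨hsf, ?_⟩, ⟨hsf, ?_⟩⟩
  · intro π hπ
    obtain ⟨l, h1, h2, h3⟩ := sq_of_crux (z := seq π)
      (fun i j hi hj e => seq_inj π (by omega) (by omega) e) (by
      intro i j hi hi' hj hj'
      have := hπ ⟨i - 1, by omega⟩ ⟨j - 1, by omega⟩
      rw [hv] at this
      show _ ↔ v (i - 1) < v (j - 1)
      rw [← this, ← seq_lt π i j (by omega) (by omega)]
      simp only [Fin.succ_mk, show i - 1 + 1 = i by omega, show j - 1 + 1 = j by omega]) cl
    exact ⟨0, l, (hasSquareAt_iff (seq_lt π) 0 l).2 ⟨h1, by omega, h3⟩⟩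
  · intro π hπ
    obtain ⟨l, h1, h2, h3⟩ := sq_of_crux (z := fun i => seq π (n - i))
      (fun i j hi hj e => by
        have := seq_inj π (by omega) (by omega) e
        omega) (by
      intro i j hi hi' hj hj'
      have := hπ ⟨n - i, by omega⟩ ⟨n - j, by omega⟩
      rw [hv] at this
      show seq π (n - i) < seq π (n - j) ↔ v (n - i) < v (n - j)
      rw [← this, ← seq_lt π _ _ (by omega) (by omega)]
      simp only [Fin.castSucc_mk]) cr
    exact ⟨_, l, (hasSquareAt_iff (seq_lt π) _ l).2 ⟨h1, by omega,
      Sq.rev (N := n) (v := seq π) (fun i _ _ => rfl) (by omega) h3⟩⟩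

theorem Crux.cast {y : ℕ → ℕ} {n : ℕ} (h : Crux y n) : Crux (fun i => (y i : ℤ)) n := by
  simpa [Crux] using h

theorem good_of_bicrucial {n : ℕ} {σ : Equiv.Perm (Fin n)} (h : Bicrucial σ) :
    Good (fun i => (seq σ (n - i) : ℤ)) n := by
  obtain ⟨⟨hsf, hl⟩, ⟨_, hr⟩⟩ := h
  have sf : SF (seq σ) n := (squareFree_iff (seq_lt σ)).1 hsf
  refine ⟨?_, ?_, ?_, ?_⟩
  · intro i j hi hi' hj hj' e
    have := seq_inj σ (by omega) (by omega) (Nat.cast_injective e)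
    omega
  · intro k l hk hl hkl hs
    refine sf (n + 1 - k - 2 * l) l hl (by omega) ?_
    refine Sq.rev (N := n) (w := fun i => seq σ (n - i)) (fun i _ _ => rfl) (by omega) ?_
    intro i hi j hj
    have := hs i hi j hj
    simpa using this
  · refine Crux.cast (y := fun i => seq σ (n - i)) (crux_of_sq ?_ ?_)
    · intro i j hi hi' hj hj' e
      have := seq_inj σ (by omega) (by omega) e
      omega
    · intro z zinj hz
      obtain ⟨π, hπ⟩ := exists_rank (fun t : Fin (n + 1) => z (n - t)) (by
        intro i j e
        have := zinj _ _ (by omega) (by omega) e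
        apply Fin.ext
        omega)
      have hv : ∀ i j (hi : i < n + 1) (hj : j < n + 1),
          π ⟨i, hi⟩ < π ⟨j, hj⟩ ↔ (fun t => z (n - t)) i < (fun t => z (n - t)) j :=
        fun i j hi hj => hπ ⟨i, hi⟩ ⟨j, hj⟩
      have hw : ∀ i j, i < n → j < n → (z (n - i) < z (n - j) ↔ seq σ i < seq σ j) := by
        intro i j hi hj
        rw [hz _ _ (by omega) (by omega) (by omega) (by omega)]
        simp only [show n - (n - i) = i by omega, show n - (n - j) = j by omega]
      obtain ⟨k, l, hs⟩ := hr π (by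
        intro i j
        rw [hπ]
        refine (hw i j i.2 j.2).trans (seq_lt σ i j i.2 j.2).symm)
      rw [hasSquareAt_iff hv] at hs
      obtain ⟨h1, h2, h3⟩ := hs
      have hk : k + 2 * l = n + 1 := by
        by_contra hne
        refine sf k l h1 (by omega) ?_
        intro i hi j hj
        rw [← hw _ _ (by omega) (by omega), ← hw _ _ (by omega) (by omega)]
        exact h3 i hi j hj
      refine ⟨l, h1, by omega, ?_⟩
      have h4 := Sq.rev (N := n) (v := z) (fun i _ _ => rfl) (by omega) h3
      rwa [show n + 1 - k - 2 * l = 0 by omega] at h4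
  · refine Crux.congr (y := fun i => (seq σ (i - 1) : ℤ)) ?_
      (Crux.cast (y := fun i => seq σ (i - 1)) (crux_of_sq ?_ ?_))
    · intro i hi hi'
      show (seq σ (n - (n + 1 - i)) : ℤ) = _
      rw [show n - (n + 1 - i) = i - 1 by omega]
    · intro i j hi hi' hj hj' e
      have := seq_inj σ (by omega) (by omega) e
      omega
    · intro z zinj hz
      obtain ⟨π, hπ⟩ := exists_rank (fun t : Fin (n + 1) => z t) (by
        intro i j e
        have := zinj _ _ (by omega) (by omega) e
        apply Fin.ext
        omega)
      have hv : ∀ i j (hi : i < n + 1) (hj : j < n + 1), π ⟨i, hi⟩ < π ⟨j, hj⟩ ↔ z i < z j :=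
        fun i j hi hj => hπ ⟨i, hi⟩ ⟨j, hj⟩
      have hw : ∀ i j, i < n → j < n → (z (i + 1) < z (j + 1) ↔ seq σ i < seq σ j) := by
        intro i j hi hj
        rw [hz _ _ (by omega) (by omega) (by omega) (by omega)]
        simp only [Nat.add_sub_cancel]
      obtain ⟨k, l, hs⟩ := hl π (by
        intro i j
        rw [hπ]
        refine (hw i j i.2 j.2).trans (seq_lt σ i j i.2 j.2).symm)
      rw [hasSquareAt_iff hv] at hs
      obtain ⟨h1, h2, h3⟩ := hs
      have hk : k = 0 := by
        by_contra hne
        refine sf (k - 1) l h1 (by omega) ?_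
        intro i hi j hj
        rw [← hw _ _ (by omega) (by omega), ← hw _ _ (by omega) (by omega)]
        have := h3 i hi j hj
        rwa [show k + i = k - 1 + i + 1 by omega, show k + j = k - 1 + j + 1 by omega,
          show k + l + i = k - 1 + l + i + 1 by omega,
          show k + l + j = k - 1 + l + j + 1 by omega] at this
      subst hk
      exact ⟨l, h1, by omega, h3⟩

end BC
namespace BC

/-! ### A square-free sequence -/

/-- the base sequence (paper-folding like) -/
def f (i : ℕ) : ℚ :=
  if h : i = 0 then 1 / 2
  else if i % 4 = 1 then 0
  else if i % 4 = 3 then 1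
  else 1 / 3 + f (i / 2) / 3
termination_by i
decreasing_by omega

theorem f_one {i : ℕ} (h : i % 4 = 1) : f i = 0 := by
  rw [f, dif_neg (by omega), if_pos h]

theorem f_three {i : ℕ} (h : i % 4 = 3) : f i = 1 := by
  rw [f, dif_neg (by omega), if_neg (by omega), if_pos h]

theorem f_two_mul (i : ℕ) : f (2 * i) = 1 / 3 + f i / 3 := by
  by_cases h : i = 0
  · subst h
    have : f 0 = 1 / 2 := by rw [f]; simp
    rw [Nat.mul_zero, this]; norm_num
  · rw [f, dif_neg (by omega), if_neg (by omega), if_neg (by omega),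
      show 2 * i / 2 = i by omega]

theorem f_bound (i : ℕ) : 0 ≤ f i ∧ f i ≤ 1 := by
  induction i using Nat.strong_induction_on with
  | _ i ih =>
    rcases (by omega : i % 4 = 1 ∨ i % 4 = 3 ∨ i % 2 = 0) with h | h | h
    · rw [f_one h]; norm_num
    · rw [f_three h]; norm_num
    · rw [show i = 2 * (i / 2) by omega, f_two_mul]
      by_cases h0 : i = 0
      · subst h0
        have : f 0 = 1 / 2 := by rw [f]; simp
        simp only [Nat.zero_div, this]; norm_num
      · have := ih (i / 2) (by omega)
        constructor <;> linarith [this.1, this.2]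

theorem f_even {i : ℕ} (h : i % 2 = 0) : 0 < f i ∧ f i < 1 := by
  rw [show i = 2 * (i / 2) by omega, f_two_mul]
  have := f_bound (i / 2)
  constructor <;> linarith [this.1, this.2]

theorem f_up {i : ℕ} (h : i % 4 = 1 ∨ i % 4 = 2) : f i < f (i + 1) := by
  rcases h with h | h
  · rw [f_one h]; exact (f_even (by omega)).1
  · rw [f_three (i := i + 1) (by omega)]; exact (f_even (by omega)).2

theorem f_down {i : ℕ} (h : i % 4 = 0 ∨ i % 4 = 3) : f (i + 1) < f i := by
  rcases h with h | h
  · rw [f_one (i := i + 1) (by omega)]; exact (f_even (by omega)).1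
  · rw [f_three h]; exact (f_even (by omega)).2

/-- break ties by position -/
def tie (q : ℕ → ℚ) (i : ℕ) : ℚ ×ₗ ℕ := toLex (q i, i)

theorem tie_lt {q : ℕ → ℚ} {i j : ℕ} : tie q i < tie q j ↔ q i < q j ∨ (q i = q j ∧ i < j) := by
  simp only [tie, Prod.Lex.toLex_lt_toLex]

theorem tie_of_lt {q : ℕ → ℚ} {i j : ℕ} (h : q i < q j) : tie q i < tie q j :=
  tie_lt.2 (Or.inl h)

theorem tie_inj {q : ℕ → ℚ} {i j : ℕ} (h : tie q i = tie q j) : i = j := by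
  have := congrArg ofLex h
  simp only [tie, ofLex_toLex, Prod.mk.injEq] at this
  exact this.2

/-- a direction pattern of period four restricts squares to half-lengths divisible by four -/
theorem dir4 {α : Type*} [LinearOrder α] {v : ℕ → α} {k l c : ℕ} (hl : 2 ≤ l)
    (hd : ∀ i, k ≤ i → i + 1 < k + 2 * l →
      (v i < v (i + 1) ↔ ((i + c) % 4 = 1 ∨ (i + c) % 4 = 2)))
    (h : Sq v k l) : l % 4 = 0 := by
  have h0 := h 0 (by omega) 1 (by omega)
  simp only [Nat.add_zero] at h0
  rw [hd k le_rfl (by omega), hd (k + l) (by omega) (by omega)] at h0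
  by_cases h3 : l = 2
  · omega
  · have h1 := h 1 (by omega) 2 (by omega)
    have e1 := hd (k + 1) (by omega) (by omega)
    have e2 := hd (k + l + 1) (by omega) (by omega)
    simp only [Nat.add_assoc, Nat.reduceAdd] at h1 e1 e2 h0
    rw [e1, e2] at h1
    omega

theorem Sq.evens {α β : Type*} [LinearOrder α] [LinearOrder β] {v : ℕ → α} {u : ℕ → β}
    {k l c : ℕ} (hl : l % 2 = 0)
    (hu : ∀ i j, k ≤ 2 * i → 2 * i < k + 2 * l → k ≤ 2 * j → 2 * j < k + 2 * l →
      (v (2 * i) < v (2 * j) ↔ u (i + c) < u (j + c)))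
    (h : Sq v k l) : Sq u ((k + 1) / 2 + c) (l / 2) := by
  intro i hi j hj
  have h1 := h (2 * ((k + 1) / 2) + 2 * i - k) (by omega) (2 * ((k + 1) / 2) + 2 * j - k) (by omega)
  rw [show k + (2 * ((k + 1) / 2) + 2 * i - k) = 2 * ((k + 1) / 2 + i) by omega,
    show k + (2 * ((k + 1) / 2) + 2 * j - k) = 2 * ((k + 1) / 2 + j) by omega,
    show k + l + (2 * ((k + 1) / 2) + 2 * i - k) = 2 * ((k + 1) / 2 + l / 2 + i) by omega,
    show k + l + (2 * ((k + 1) / 2) + 2 * j - k) = 2 * ((k + 1) / 2 + l / 2 + j) by omega,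
    hu _ _ (by omega) (by omega) (by omega) (by omega),
    hu _ _ (by omega) (by omega) (by omega) (by omega)] at h1
  rw [show (k + 1) / 2 + c + i = (k + 1) / 2 + i + c by omega,
    show (k + 1) / 2 + c + j = (k + 1) / 2 + j + c by omega,
    show (k + 1) / 2 + c + l / 2 + i = (k + 1) / 2 + l / 2 + i + c by omega,
    show (k + 1) / 2 + c + l / 2 + j = (k + 1) / 2 + l / 2 + j + c by omega]
  exact h1

theorem f_sf (l : ℕ) : ∀ k, 2 ≤ l → ¬ Sq (tie f) k l := by
  induction l using Nat.strong_induction_on with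
  | _ l ih =>
    intro k hl h
    have h4 : l % 4 = 0 := by
      refine dir4 (c := 0) hl ?_ h
      intro i _ _
      constructor
      · intro hlt
        by_contra hc
        exact lt_asymm hlt (tie_of_lt (f_down (by omega)))
      · intro h'
        exact tie_of_lt (f_up (by omega))
    refine ih (l / 2) (by omega) ((k + 1) / 2 + 0) (by omega)
      (Sq.evens (v := tie f) (u := tie f) (by omega) ?_ h)
    intro i j _ _ _ _
    simp only [tie_lt, f_two_mul, Nat.add_zero]
    constructor
    · rintro (h1 | ⟨h1, h2⟩)
      · left; linarith
      · right; exact ⟨by linarith, by omega⟩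
    · rintro (h1 | ⟨h1, h2⟩)
      · left; linarith
      · right; exact ⟨by linarith, by omega⟩

/-! ### Boolean checkers -/

def allB (p : ℕ → Bool) : ℕ → Bool
  | 0 => true
  | k + 1 => p k && allB p k

def anyB (p : ℕ → Bool) : ℕ → Bool
  | 0 => false
  | k + 1 => p k || anyB p k

theorem allB_spec {p : ℕ → Bool} {n : ℕ} (h : allB p n = true) : ∀ k < n, p k = true := by
  induction n with
  | zero => intro k hk; omega
  | succ n ih =>
    rw [allB, Bool.and_eq_true] at h
    intro k hk
    rcases Nat.lt_succ_iff_lt_or_eq.1 hk with h1 | rfl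
    · exact ih h.2 k h1
    · exact h.1

theorem anyB_spec {p : ℕ → Bool} {n : ℕ} (h : anyB p n = true) : ∃ k < n, p k = true := by
  induction n with
  | zero => simp [anyB] at h
  | succ n ih =>
    rw [anyB, Bool.or_eq_true] at h
    rcases h with h | h
    · exact ⟨n, by omega, h⟩
    · obtain ⟨k, hk, hp⟩ := ih h
      exact ⟨k, by omega, hp⟩

/-- some pair of entries of the windows of length `l` at `k` and `t` is ordered differently -/
def refuteB (kl : ℕ → ℕ → Bool) (k t l : ℕ) : Bool :=
  anyB (fun d => anyB (fun i =>
    (kl (k + i) (k + (i + (l - 1 - d))) && kl (t + (i + (l - 1 - d))) (t + i)) ||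
    (kl (k + (i + (l - 1 - d))) (k + i) && kl (t + i) (t + (i + (l - 1 - d)))))
    (l - (l - 1 - d))) (l - 1)

theorem refuteB_spec {kl : ℕ → ℕ → Bool} {k t l : ℕ} (h : refuteB kl k t l = true) :
    ∃ i < l, ∃ j < l, kl (k + i) (k + j) = true ∧ kl (t + j) (t + i) = true := by
  obtain ⟨d, hd, h⟩ := anyB_spec h
  obtain ⟨i, hi, h⟩ := anyB_spec h
  rw [Bool.or_eq_true, Bool.and_eq_true, Bool.and_eq_true] at h
  rcases h with h | h
  · exact ⟨i, by omega, i + (l - 1 - d), by omega, h⟩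
  · exact ⟨i + (l - 1 - d), by omega, i, by omega, h⟩

def cruxB (kl : ℕ → ℕ → Bool) (ls : List ℕ) (m : ℕ) : Bool :=
  ls.all (fun l => allB (fun i => allB (fun j =>
    (kl (i + 1) (j + 1) && kl (l + (i + 1)) (l + (j + 1))) ||
    (kl (j + 1) (i + 1) && kl (l + (j + 1)) (l + (i + 1)))) i) (l - 1)) &&
  (ls.any (fun l => allB (fun i => kl (l + (i + 1)) l) (l - 1)) &&
  allB (fun e => ls.any (fun l => allB (fun i =>
    (kl (i + 1) (e + 1) && kl (l + (i + 1)) l) ||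
    ((Nat.beq i e || kl (e + 1) (i + 1)) && kl l (l + (i + 1)))) (l - 1))) m)

theorem cruxB_spec {α : Type*} [LinearOrder α] {y : ℕ → α} {kl : ℕ → ℕ → Bool}
    {ls : List ℕ} {n m M : ℕ}
    (hkl : ∀ i j, 1 ≤ i → i ≤ M → 1 ≤ j → j ≤ M → kl i j = true → y i < y j)
    (hls : ∀ l ∈ ls, 2 ≤ l ∧ l ≤ m + 1 ∧ 2 * l ≤ M + 1) (hm : m ≤ M) (hM : M ≤ n)
    (h : cruxB kl ls m = true) : Crux y n := by
  classical
  rw [cruxB, Bool.and_eq_true, Bool.and_eq_true] at h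
  obtain ⟨h1, h2, h3⟩ := h
  rw [List.all_eq_true] at h1
  rw [List.any_eq_true] at h2
  have iso' : ∀ l ∈ ls, ∀ i j, 1 ≤ j → j < i → i < l →
      (y i < y j ↔ y (l + i) < y (l + j)) ∧ (y j < y i ↔ y (l + j) < y (l + i)) := by
    intro l hl i j hj hji hi
    obtain ⟨l2, lm, lM⟩ := hls l hl
    have := allB_spec (allB_spec (h1 l hl) (i - 1) (by omega)) (j - 1) (by omega)
    rw [show i - 1 + 1 = i by omega, show j - 1 + 1 = j by omega, Bool.or_eq_true,
      Bool.and_eq_true, Bool.and_eq_true] at this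
    rcases this with ⟨a, b⟩ | ⟨a, b⟩
    · have a' := hkl _ _ (by omega) (by omega) (by omega) (by omega) a
      have b' := hkl _ _ (by omega) (by omega) (by omega) (by omega) b
      simp [a', b', a'.not_gt, b'.not_gt]
    · have a' := hkl _ _ (by omega) (by omega) (by omega) (by omega) a
      have b' := hkl _ _ (by omega) (by omega) (by omega) (by omega) b
      simp [a', b', a'.not_gt, b'.not_gt]
  have iso : ∀ l ∈ ls, ∀ i j, 1 ≤ i → i < l → 1 ≤ j → j < l →
      (y i < y j ↔ y (l + i) < y (l + j)) := by
    intro l hl i j hi hi' hj hj'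
    rcases lt_trichotomy i j with h | rfl | h
    · exact (iso' l hl j i hi h hj').2
    · simp
    · exact (iso' l hl i j hj h hi').1
  intro D hD
  by_cases htop : ∀ i, 1 ≤ i → i ≤ m → D i
  · obtain ⟨l, hl, h2⟩ := h2
    obtain ⟨l2, lm, lM⟩ := hls l hl
    refine ⟨l, l2, by omega, iso l hl, ?_⟩
    intro i hi hi'
    have := allB_spec h2 (i - 1) (by omega)
    rw [show i - 1 + 1 = i by omega] at this
    have := hkl _ _ (by omega) (by omega) (by omega) (by omega) this
    simp [this, htop i hi (by omega)]
  · push Not at htop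
    obtain ⟨i0, hi0, hi0', hd0⟩ := htop
    obtain ⟨e, he, hmin⟩ := Finset.exists_min_image
      ((Finset.Icc 1 m).filter (fun i => ¬ D i)) y ⟨i0, by simp [hi0, hi0', hd0]⟩
    simp only [Finset.mem_filter, Finset.mem_Icc] at he hmin
    have hDe : ∀ i, 1 ≤ i → i ≤ m → y i < y e → D i := by
      intro i hi hi' hlt
      by_contra hd
      exact absurd hlt (not_lt.2 (hmin i ⟨⟨hi, hi'⟩, hd⟩))
    have h4 := allB_spec h3 (e - 1) (by omega)
    rw [List.any_eq_true] at h4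
    obtain ⟨l, hl, h4⟩ := h4
    obtain ⟨l2, lm, lM⟩ := hls l hl
    refine ⟨l, l2, by omega, iso l hl, ?_⟩
    intro i hi hi'
    have := allB_spec h4 (i - 1) (by omega)
    rw [show i - 1 + 1 = i by omega, show e - 1 + 1 = e by omega, Bool.or_eq_true,
      Bool.and_eq_true, Bool.and_eq_true, Bool.or_eq_true] at this
    rcases this with ⟨a, b⟩ | ⟨a, b⟩
    · have a' := hkl _ _ (by omega) (by omega) (by omega) (by omega) a
      have b' := hkl _ _ (by omega) (by omega) (by omega) (by omega) b
      simp [b', hDe i hi (by omega) a']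
    · have b' := hkl _ _ (by omega) (by omega) (by omega) (by omega) b
      have hd : ¬ D i := by
        rcases a with a | a
        · have := Nat.eq_of_beq_eq_true a
          rw [show i = e by omega]
          exact he.2
        · have a' := hkl _ _ (by omega) (by omega) (by omega) (by omega) a
          exact fun hd => he.2 (hD e i (by omega) (by omega) (by omega) (by omega) hd a')
      simp [b'.not_gt, hd]

/-- the checks on the lists of half-lengths -/
def lensB (ls : List ℕ) (m M n : ℕ) : Bool :=
  ls.all (fun l => Nat.ble 2 l && (Nat.ble l (m + 1) && Nat.ble (2 * l) (M + 1))) &&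
    (Nat.ble m M && Nat.ble M n)

theorem lensB_spec {ls : List ℕ} {m M n : ℕ} (h : lensB ls m M n = true) :
    (∀ l ∈ ls, 2 ≤ l ∧ l ≤ m + 1 ∧ 2 * l ≤ M + 1) ∧ m ≤ M ∧ M ≤ n := by
  simp only [lensB, Bool.and_eq_true, List.all_eq_true, Nat.ble_eq] at h
  exact h

/-- the `i`-th byte -/
def val (N i : ℕ) : ℕ := Nat.mod (Nat.shiftRight N (Nat.mul 8 i)) 256

/-! ### Explicit permutations -/

def klE (N i j : ℕ) : Bool := Nat.ble (Nat.succ (val N i)) (val N j)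

def sfB (kl : ℕ → ℕ → Bool) (n : ℕ) : Bool :=
  allB (fun k => allB (fun l => refuteB kl k (k + (l + 2)) (l + 2)) ((n - k) / 2 - 1)) n

def explB (N n : ℕ) (lsL : List ℕ) (mL ML : ℕ) (lsR : List ℕ) (mR MR : ℕ) : Bool :=
  (lensB lsL mL ML n && lensB lsR mR MR n) &&
  (cruxB (fun i j => klE N (i - 1) (j - 1)) lsL mL &&
  (cruxB (fun i j => klE N (n - i) (n - j)) lsR mR && sfB (klE N) n))

theorem not_sq {α : Type*} [LinearOrder α] {v : ℕ → α} {k l i j : ℕ} (hi : i < l) (hj : j < l)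
    (h1 : v (k + i) < v (k + j)) (h2 : v (k + l + j) < v (k + l + i)) : ¬ Sq v k l :=
  fun h => lt_asymm ((h i hi j hj).1 h1) h2

theorem explB_spec {N n : ℕ} {lsL : List ℕ} {mL ML : ℕ} {lsR : List ℕ} {mR MR : ℕ}
    (h : explB N n lsL mL ML lsR mR MR = true) : ∃ σ : Equiv.Perm (Fin n), Bicrucial σ := by
  simp only [explB, Bool.and_eq_true] at h
  obtain ⟨⟨hL, hR⟩, cL, cR, sf⟩ := h
  have hkl : ∀ i j, klE N i j = true → tie (fun i => (val N i : ℚ)) i <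
      tie (fun i => (val N i : ℚ)) j := by
    intro i j hij
    refine tie_of_lt ?_
    rw [klE, Nat.ble_eq] at hij
    exact_mod_cast hij
  refine exists_of_seq (v := tie (fun i => (val N i : ℚ))) (fun i j _ _ => tie_inj) ?_ ?_ ?_
  · intro k l hl hkl'
    have h1 := allB_spec (allB_spec sf k (by omega)) (l - 2) (by omega)
    rw [show l - 2 + 2 = l by omega] at h1
    obtain ⟨i, hi, j, hj, h2, h3⟩ := refuteB_spec h1
    exact not_sq hi hj (hkl _ _ h2) (hkl _ _ h3)
  · obtain ⟨h1, h2, h3⟩ := lensB_spec hL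
    exact cruxB_spec (fun i j _ _ _ _ h => hkl _ _ h) h1 h2 h3 cL
  · obtain ⟨h1, h2, h3⟩ := lensB_spec hR
    exact cruxB_spec (fun i j _ _ _ _ h => hkl _ _ h) h1 h2 h3 cR

end BC
namespace BC

/-! ### Periodic families: a left gadget, a long uniform part, a right gadget -/

/-- even positions of the uniform part -/
def un (a w i : ℕ) : Bool := Nat.beq (i % 2) 0 && (Nat.ble a i && Nat.ble (i + 1) w)

def slot (r : ℕ) : ℕ := bif Nat.beq r 1 then 120 else bif Nat.beq r 3 then 40 else 80

/-- the integral part of the entries -/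
def cd (A G a w i : ℕ) : ℕ :=
  bif Nat.ble (i + 1) a then val A i else bif Nat.ble (i + 1) w then slot (i % 4)
  else val G (i - w)

def upB (x : ℕ) : Bool := Nat.beq (x % 4) 1 || Nat.beq (x % 4) 2

/-- comparisons which are easy to see -/
def klP (A G a p w i j : ℕ) : Bool :=
  Nat.ble (cd A G a w i + 1) (cd A G a w j) ||
  (un a w i && (un a w j && ((Nat.beq j (i + 2) && upB (i / 2 + p)) ||
    (Nat.beq i (j + 2) && !upB (j / 2 + p)))))

def qP (A G a p w i : ℕ) : ℚ :=
  (cd A G a w i : ℚ) + (if un a w i = true then f (i / 2 + p) / 2 else 0)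

theorem un_iff {a w i : ℕ} : un a w i = true ↔ i % 2 = 0 ∧ a ≤ i ∧ i < w := by
  simp only [un, Bool.and_eq_true, Nat.ble_eq, Nat.beq_eq]
  omega

theorem cd_left {A G a w i : ℕ} (h : i < a) : cd A G a w i = val A i := by
  have : Nat.ble (i + 1) a = true := by rw [Nat.ble_eq]; omega
  simp only [cd, this, cond_true]

theorem cd_mid {A G a w i : ℕ} (h : a ≤ i) (h' : i < w) : cd A G a w i = slot (i % 4) := by
  have h1 : Nat.ble (i + 1) a = false := by
    rw [← Bool.not_eq_true, Nat.ble_eq]; omega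
  have h2 : Nat.ble (i + 1) w = true := by rw [Nat.ble_eq]; omega
  simp only [cd, h1, h2, cond_true, cond_false]

theorem cd_right {A G a w i : ℕ} (h : a ≤ i) (h' : w ≤ i) : cd A G a w i = val G (i - w) := by
  have h1 : Nat.ble (i + 1) a = false := by
    rw [← Bool.not_eq_true, Nat.ble_eq]; omega
  have h2 : Nat.ble (i + 1) w = false := by
    rw [← Bool.not_eq_true, Nat.ble_eq]; omega
  simp only [cd, h1, h2, cond_false]

theorem cd_un {A G a w i : ℕ} (h : un a w i = true) : cd A G a w i = 80 := by
  rw [un_iff] at h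
  rw [cd_mid h.2.1 h.2.2]
  rcases (by omega : i % 4 = 0 ∨ i % 4 = 2) with e | e <;> rw [e] <;> rfl

theorem frac_bound (a p w i : ℕ) :
    0 ≤ (if un a w i = true then f (i / 2 + p) / 2 else 0 : ℚ) ∧
      (if un a w i = true then f (i / 2 + p) / 2 else 0 : ℚ) < 1 := by
  have := f_bound (i / 2 + p)
  split_ifs
  · constructor <;> linarith [this.1, this.2]
  · norm_num

/-- position `x` for the short uniform part looks like position `x + 8 r` for the long one -/
def Corr (A G a W w r x : ℕ) : Prop :=
  cd A G a w (x + 8 * r) = cd A G a W x ∧ un a w (x + 8 * r) = un a W x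

theorem corr_zero {A G a W w x : ℕ} (hw : W ≤ w) (hx : x < W) : Corr A G a W w 0 x := by
  refine ⟨?_, ?_⟩
  · rw [show x + 8 * 0 = x by omega]
    by_cases h : x < a
    · rw [cd_left h, cd_left h]
    · rw [cd_mid (by omega) (by omega), cd_mid (by omega) (by omega)]
  · rw [Bool.eq_iff_iff, un_iff, un_iff]; omega

theorem corr_mid {A G a W w r x : ℕ} (ha : a ≤ x) (hx : x < W) (hr : x + 8 * r < w) :
    Corr A G a W w r x := by
  refine ⟨?_, ?_⟩
  · rw [cd_mid (by omega) (by omega), cd_mid (by omega) (by omega),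
      show (x + 8 * r) % 4 = x % 4 by omega]
  · rw [Bool.eq_iff_iff, un_iff, un_iff]; omega

theorem corr_end {A G a W s x : ℕ} (ha : a ≤ x) : Corr A G a W (W + 8 * s) s x := by
  refine ⟨?_, ?_⟩
  · by_cases hx : x < W
    · rw [cd_mid (by omega) (by omega), cd_mid (by omega) (by omega),
        show (x + 8 * s) % 4 = x % 4 by omega]
    · rw [cd_right (by omega) (by omega), cd_right (by omega) (by omega),
        show x + 8 * s - (W + 8 * s) = x - W by omega]
  · rw [Bool.eq_iff_iff, un_iff, un_iff]; omega

theorem upB_iff {x : ℕ} : upB x = true ↔ (x % 4 = 1 ∨ x % 4 = 2) := by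
  simp only [upB, Bool.or_eq_true, Nat.beq_eq]

theorem klP_spec {A G a p W w r i j : ℕ} (hi : Corr A G a W w r i) (hj : Corr A G a W w r j)
    (h : klP A G a p W i j = true) :
    tie (qP A G a p w) (i + 8 * r) < tie (qP A G a p w) (j + 8 * r) := by
  refine tie_of_lt ?_
  rw [klP, Bool.or_eq_true] at h
  rcases h with h | h
  · rw [Nat.ble_eq, ← hi.1, ← hj.1] at h
    have b1 := frac_bound a p w (i + 8 * r)
    have b2 := frac_bound a p w (j + 8 * r)
    have h' : (cd A G a w (i + 8 * r) : ℚ) + 1 ≤ cd A G a w (j + 8 * r) := by exact_mod_cast h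
    simp only [qP]
    linarith [b1.2, b2.1]
  · rw [Bool.and_eq_true, Bool.and_eq_true, ← hi.2, ← hj.2] at h
    obtain ⟨h1, h2, h3⟩ := h
    simp only [qP, h1, h2, if_true, cd_un h1, cd_un h2]
    rw [Bool.or_eq_true, Bool.and_eq_true, Bool.and_eq_true, Nat.beq_eq, Nat.beq_eq, upB_iff,
      Bool.not_eq_true', ← Bool.not_eq_true, upB_iff] at h3
    rcases h3 with ⟨rfl, h4⟩ | ⟨rfl, h4⟩
    · have := f_up (i := (i + 8 * r) / 2 + p) (by omega)
      rw [show (i + 2 + 8 * r) / 2 + p = (i + 8 * r) / 2 + p + 1 by omega]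
      linarith
    · have := f_down (i := (j + 8 * r) / 2 + p) (by omega)
      rw [show (j + 2 + 8 * r) / 2 + p = (j + 8 * r) / 2 + p + 1 by omega]
      linarith

/-- the uniform part is square-free -/
theorem uniform_sf {A G a p w k l : ℕ} (hk : a ≤ k) (hl : 2 ≤ l) (hw : k + 2 * l ≤ w) :
    ¬ Sq (tie (qP A G a p w)) k l := by
  intro h
  have q1 : ∀ i, a ≤ i → i < w → i % 4 = 1 → qP A G a p w i = 120 := by
    intro i h1 h2 h3
    have : ¬ un a w i = true := by rw [un_iff]; omega
    rw [qP, if_neg this, cd_mid h1 h2, h3, show slot 1 = 120 from rfl]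
    norm_num
  have q3 : ∀ i, a ≤ i → i < w → i % 4 = 3 → qP A G a p w i = 40 := by
    intro i h1 h2 h3
    have : ¬ un a w i = true := by rw [un_iff]; omega
    rw [qP, if_neg this, cd_mid h1 h2, h3, show slot 3 = 40 from rfl]
    norm_num
  have q0 : ∀ i, a ≤ i → i < w → i % 2 = 0 → qP A G a p w i = 80 + f (i / 2 + p) / 2 := by
    intro i h1 h2 h3
    have : un a w i = true := by rw [un_iff]; omega
    rw [qP, if_pos this, cd_un this]
    norm_num
  have h4 : l % 4 = 0 := by
    refine dir4 (c := 2) hl ?_ h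
    intro i hi hi'
    have e1 := f_bound (i / 2 + p)
    have e2 := f_bound ((i + 1) / 2 + p)
    have hup : ((i + 2) % 4 = 1 ∨ (i + 2) % 4 = 2) →
        qP A G a p w i < qP A G a p w (i + 1) := by
      rintro (h' | h')
      · rw [q3 i (by omega) (by omega) (by omega), q0 (i + 1) (by omega) (by omega) (by omega)]
        linarith [e2.1]
      · rw [q0 i (by omega) (by omega) (by omega), q1 (i + 1) (by omega) (by omega) (by omega)]
        linarith [e1.2]
    have hdn : ¬ ((i + 2) % 4 = 1 ∨ (i + 2) % 4 = 2) →
        qP A G a p w (i + 1) < qP A G a p w i := by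
      intro h'
      rcases (by omega : i % 4 = 1 ∨ i % 4 = 2) with h' | h'
      · rw [q1 i (by omega) (by omega) (by omega), q0 (i + 1) (by omega) (by omega) (by omega)]
        linarith [e2.2]
      · rw [q0 i (by omega) (by omega) (by omega), q3 (i + 1) (by omega) (by omega) (by omega)]
        linarith [e1.1]
    constructor
    · intro hlt
      by_contra hc
      exact lt_asymm hlt (tie_of_lt (hdn hc))
    · intro h'
      exact tie_of_lt (hup h')
  refine f_sf (l / 2) ((k + 1) / 2 + p) (by omega)
    (Sq.evens (v := tie (qP A G a p w)) (u := tie f) (by omega) ?_ h)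
  intro i j h1 h2 h3 h5
  rw [tie_lt, tie_lt, q0 _ (by omega) (by omega) (by omega), q0 _ (by omega) (by omega) (by omega),
    show 2 * i / 2 + p = i + p by omega, show 2 * j / 2 + p = j + p by omega]
  constructor
  · rintro (h1 | ⟨h1, h2⟩)
    · left; linarith
    · right; exact ⟨by linarith, by omega⟩
  · rintro (h1 | ⟨h1, h2⟩)
    · left; linarith
    · right; exact ⟨by linarith, by omega⟩

/-- the finite check for a whole family -/
def famB (A G a b p W : ℕ) (lsL : List ℕ) (mL ML : ℕ) (lsR : List ℕ) (mR MR : ℕ) : Bool :=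
  ((Nat.ble 1 a && Nat.ble (a + b + 4) W) && (Nat.ble (2 * a + 4) W && Nat.ble (a + 16) W)) &&
  ((lensB lsL mL ML W && lensB lsR mR MR (W + b - a)) &&
  ((cruxB (fun i j => klP A G a p W (i - 1) (j - 1)) lsL mL &&
    cruxB (fun i j => klP A G a p W (W + b - i) (W + b - j)) lsR mR) &&
  ((allB (fun l => allB (fun k =>
      (Nat.ble (W - 4 - b + k + 2 * (l + 2)) W || Nat.ble (W - 4 - b + k + (l + 2) + 3) W) ||
      refuteB (klP A G a p W) (W - 4 - b + k) (W - 4 - b + k + (l + 2)) (l + 2))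
      (2 * b + 5 - 2 * (l + 2))) (b + 1) &&
    allB (fun k => allB (fun l => refuteB (klP A G a p W) k (k + (l + 2)) (l + 2)) (a + 1 - k)) a) &&
  (allB (fun t => refuteB (klP A G a p W) (a - 1) (a + t) 4) ((W + b) / 2) &&
    allB (fun t => refuteB (klP A G a p W) (W - 3) (a + t) 4) 8))))

theorem famB_spec {A G a b p W : ℕ} {lsL : List ℕ} {mL ML : ℕ} {lsR : List ℕ} {mR MR : ℕ}
    (h : famB A G a b p W lsL mL ML lsR mR MR = true) (s n : ℕ) (hn : n = W + b + 8 * s) :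
    ∃ σ : Equiv.Perm (Fin n), Bicrucial σ := by
  simp only [famB, Bool.and_eq_true, Nat.ble_eq] at h
  obtain ⟨⟨⟨ha, hab⟩, ha2, ha11⟩, ⟨hL, hR⟩, ⟨cL, cR⟩, ⟨c1, c2⟩, c3, c4⟩ := h
  obtain ⟨L1, L2, L3⟩ := lensB_spec hL
  obtain ⟨R1, R2, R3⟩ := lensB_spec hR
  obtain ⟨w, hw⟩ : ∃ w, w = W + 8 * s := ⟨_, rfl⟩
  refine exists_of_seq (v := tie (qP A G a p w)) (fun i j _ _ => tie_inj) ?_ ?_ ?_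
  · intro k l hl hkl
    by_cases hka : k < a
    · by_cases hk2 : k + l ≤ a + 2
      · -- near the left end
        have h1 := allB_spec (allB_spec c2 k hka) (l - 2) (by omega)
        rw [show l - 2 + 2 = l by omega] at h1
        obtain ⟨i, hi, j, hj, h2, h3⟩ := refuteB_spec h1
        have g2 := klP_spec (r := 0) (w := w) (corr_zero (by omega) (by omega))
          (corr_zero (by omega) (by omega)) h2
        have g3 := klP_spec (r := 0) (w := w) (corr_zero (by omega) (by omega))
          (corr_zero (by omega) (by omega)) h3
        exact not_sq hi hj g2 g3
      · -- the window at the left junction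
        obtain ⟨t, r, ht, hr⟩ : ∃ t r, a - 1 + l = a + t + 8 * r ∧ t < (W + b) / 2 ∧
            (r = s ∨ (r < s ∧ t < 8)) := by
          by_cases hs : l ≤ 8 * s
          · exact ⟨(l - 1) % 8, (l - 1) / 8, by omega, by omega, Or.inr ⟨by omega, by omega⟩⟩
          · exact ⟨l - 1 - 8 * s, s, by omega, by omega, Or.inl rfl⟩
        obtain ⟨i, hi, j, hj, h2, h3⟩ := refuteB_spec (allB_spec c3 t hr.1)
        have g2 := klP_spec (r := 0) (w := w) (corr_zero (by omega) (by omega))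
          (corr_zero (by omega) (by omega)) h2
        have g3 : tie (qP A G a p w) (a + t + j + 8 * r) <
            tie (qP A G a p w) (a + t + i + 8 * r) := by
          rcases hr.2 with rfl | hr2
          · subst hw
            exact klP_spec (corr_end (by omega)) (corr_end (by omega)) h3
          · exact klP_spec (corr_mid (by omega) (by omega) (by omega))
              (corr_mid (by omega) (by omega) (by omega)) h3
        refine not_sq (i := a - 1 - k + i) (j := a - 1 - k + j) (by omega) (by omega) ?_ ?_
        · rw [show k + (a - 1 - k + i) = a - 1 + i + 8 * 0 by omega,
            show k + (a - 1 - k + j) = a - 1 + j + 8 * 0 by omega]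
          exact g2
        · rw [show k + l + (a - 1 - k + i) = a + t + i + 8 * r by omega,
            show k + l + (a - 1 - k + j) = a + t + j + 8 * r by omega]
          exact g3
    · by_cases hkw : k + 2 * l ≤ w
      · exact uniform_sf (by omega) hl hkw
      · by_cases hk3 : k + l + 3 ≤ w
        · -- the window at the right junction
          obtain ⟨t, r, ht, hr⟩ : ∃ t r, w - 3 - l = a + t + 8 * r ∧ t < 8 :=
            ⟨(w - 3 - l - a) % 8, (w - 3 - l - a) / 8, by omega, by omega⟩
          obtain ⟨i, hi, j, hj, h2, h3⟩ := refuteB_spec (allB_spec c4 t hr)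
          have g3 := klP_spec (r := r) (w := w) (corr_mid (by omega) (by omega) (by omega))
              (corr_mid (by omega) (by omega) (by omega)) h3
          have g2 : tie (qP A G a p w) (W - 3 + i + 8 * s) <
              tie (qP A G a p w) (W - 3 + j + 8 * s) := by
            subst hw
            exact klP_spec (corr_end (by omega)) (corr_end (by omega)) h2
          refine not_sq (i := w - 3 - l - k + j) (j := w - 3 - l - k + i) (by omega) (by omega) ?_ ?_
          · rw [show k + (w - 3 - l - k + i) = a + t + i + 8 * r by omega,
              show k + (w - 3 - l - k + j) = a + t + j + 8 * r by omega]
            exact g3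
          · rw [show k + l + (w - 3 - l - k + i) = W - 3 + i + 8 * s by omega,
              show k + l + (w - 3 - l - k + j) = W - 3 + j + 8 * s by omega]
            exact g2
        · -- near the right end
          have h1 := allB_spec (allB_spec c1 (l - 2) (by omega)) (k - 8 * s - (W - 4 - b)) (by omega)
          rw [show l - 2 + 2 = l by omega,
            show W - 4 - b + (k - 8 * s - (W - 4 - b)) = k - 8 * s by omega,
            Bool.or_eq_true, Bool.or_eq_true, Nat.ble_eq, Nat.ble_eq] at h1
          rcases h1 with (h1 | h1) | h1
          · omega
          · omega
          · obtain ⟨i, hi, j, hj, h2, h3⟩ := refuteB_spec h1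
            subst hw
            have g2 := klP_spec (r := s) (corr_end (by omega)) (corr_end (by omega)) h2
            have g3 := klP_spec (r := s) (corr_end (by omega)) (corr_end (by omega)) h3
            rw [show k - 8 * s + i + 8 * s = k + i by omega,
              show k - 8 * s + j + 8 * s = k + j by omega] at g2
            rw [show k - 8 * s + l + i + 8 * s = k + l + i by omega,
              show k - 8 * s + l + j + 8 * s = k + l + j by omega] at g3
            exact not_sq hi hj g2 g3
  · refine cruxB_spec (M := ML) ?_ L1 L2 (by omega) cL
    intro i j hi hi' hj hj' h
    have e1 : i - 1 < W := by omega
    have e2 : j - 1 < W := by omega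
    exact klP_spec (r := 0) (i := i - 1) (j := j - 1) (corr_zero (by omega) e1)
      (corr_zero (by omega) e2) h
  · refine cruxB_spec (M := MR) ?_ R1 R2 (by omega) cR
    intro i j hi hi' hj hj' h
    subst hw
    have e1 : a ≤ W + b - i := by omega
    have e2 : a ≤ W + b - j := by omega
    have g := klP_spec (r := s) (i := W + b - i) (j := W + b - j) (corr_end e1) (corr_end e2) h
    rw [show W + b - i + 8 * s = n - i by omega, show W + b - j + 8 * s = n - j by omega] at g
    exact g

end BC
namespace BC

theorem ex9 : ∃ σ : Equiv.Perm (Fin 9), Bicrucial σ :=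
  explB_spec (N := 129417136559563604736)
    (lsL := [2, 4]) (mL := 3) (ML := 7) (lsR := [2, 4]) (mR := 3) (MR := 7)
    (by decide +kernel)

theorem ex13 : ∃ σ : Equiv.Perm (Fin 13), Bicrucial σ :=
  explB_spec (N := 794768442425264631915284202498)
    (lsL := [2, 4]) (mL := 3) (ML := 7) (lsR := [2, 4]) (mR := 3) (MR := 7)
    (by decide +kernel)

theorem ex15 : ∃ σ : Equiv.Perm (Fin 15), Bicrucial σ :=
  explB_spec (N := 15719263904074293313499345675749380)
    (lsL := [2, 4]) (mL := 3) (ML := 7) (lsR := [2, 4]) (mR := 3) (MR := 7)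
    (by decide +kernel)

theorem ex17 : ∃ σ : Equiv.Perm (Fin 17), Bicrucial σ :=
  explB_spec (N := 5121588485386457379116700333716946420481)
    (lsL := [2, 4]) (mL := 3) (ML := 7) (lsR := [2, 4]) (mR := 3) (MR := 7)
    (by decide +kernel)

theorem ex19 : ∃ σ : Equiv.Perm (Fin 19), Bicrucial σ :=
  explB_spec (N := 23874555206240783924179265688650934693530376)
    (lsL := [2, 4]) (mL := 3) (ML := 7) (lsR := [2, 8]) (mR := 7) (MR := 15)
    (by decide +kernel)

theorem ex21 : ∃ σ : Equiv.Perm (Fin 21), Bicrucial σ :=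
  explB_spec (N := 26398754185678244218864286781530738444640291324930)
    (lsL := [2, 4]) (mL := 3) (ML := 7) (lsR := [2, 4]) (mR := 3) (MR := 7)
    (by decide +kernel)

theorem ex23 : ∃ σ : Equiv.Perm (Fin 23), Bicrucial σ :=
  explB_spec (N := 289969238266257882493775593489438730437466144868009988)
    (lsL := [2, 4]) (mL := 3) (ML := 7) (lsR := [2, 4]) (mR := 3) (MR := 7)
    (by decide +kernel)

theorem ex25 : ∃ σ : Equiv.Perm (Fin 25), Bicrucial σ :=
  explB_spec (N := 144890374605735275922342171845034279632780848527001207833345)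
    (lsL := [2, 4]) (mL := 3) (ML := 7) (lsR := [2, 4]) (mR := 3) (MR := 7)
    (by decide +kernel)

theorem ex27 : ∃ σ : Equiv.Perm (Fin 27), Bicrucial σ :=
  explB_spec (N := 1253480846106525360123506111254857168394653773027676985730926596)
    (lsL := [2, 4]) (mL := 3) (ML := 7) (lsR := [2, 8]) (mR := 7) (MR := 15)
    (by decide +kernel)

theorem ex29 : ∃ σ : Equiv.Perm (Fin 29), Bicrucial σ :=
  explB_spec (N := 703496437913414471261893687841476756690986584327124142198083071181826)
    (lsL := [2, 4]) (mL := 3) (ML := 7) (lsR := [2, 4]) (mR := 3) (MR := 7)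
    (by decide +kernel)

theorem ex31 : ∃ σ : Equiv.Perm (Fin 31), Bicrucial σ :=
  explB_spec (N := 5348988327559058748061503607881795572542418362422365007269914960768403460)
    (lsL := [2, 4]) (mL := 3) (ML := 7) (lsR := [2, 4]) (mR := 3) (MR := 7)
    (by decide +kernel)

theorem ex32 : ∃ σ : Equiv.Perm (Fin 32), Bicrucial σ :=
  explB_spec (N := 12263899917840726410826453629096382842647315493446032876641343959580471920641)
    (lsL := [2, 4]) (mL := 3) (ML := 7) (lsR := [2, 4, 8, 16]) (mR := 15) (MR := 31)
    (by decide +kernel)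

theorem ex33 : ∃ σ : Equiv.Perm (Fin 33), Bicrucial σ :=
  explB_spec (N := 3602725065989480253202431037790198007104799365917233075758518687789910423896833)
    (lsL := [2, 4]) (mL := 3) (ML := 7) (lsR := [2, 4]) (mR := 3) (MR := 7)
    (by decide +kernel)

theorem ex34 : ∃ σ : Equiv.Perm (Fin 34), Bicrucial σ :=
  explB_spec (N := 863244985276296572941335735795905059650804632462966256818845374675332951190143766)
    (lsL := [2, 4]) (mL := 3) (ML := 7) (lsR := [2, 4, 8, 16]) (mR := 15) (MR := 31)
    (by decide +kernel)

theorem ex35 : ∃ σ : Equiv.Perm (Fin 35), Bicrucial σ :=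
  explB_spec (N := 23122640369423981173475315054071707458226167477194499872716383324810043230658103300)
    (lsL := [2, 4]) (mL := 3) (ML := 7) (lsR := [2, 8]) (mR := 7) (MR := 15)
    (by decide +kernel)

theorem ex36 : ∃ σ : Equiv.Perm (Fin 36), Bicrucial σ :=
  explB_spec (N := 56581271771752323542659474806857378382880267785555193455173171758789856385953870127360)
    (lsL := [2, 16]) (mL := 15) (ML := 31) (lsR := [2, 4, 8, 16]) (mR := 15) (MR := 31)
    (by decide +kernel)

theorem ex40 : ∃ σ : Equiv.Perm (Fin 40), Bicrucial σ :=
  explB_spec (N := 276585576972311635701902334825664360181945791877078120585861314956074289619481955268666021250820)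
    (lsL := [2, 4]) (mL := 3) (ML := 7) (lsR := [2, 4, 8, 16]) (mR := 15) (MR := 31)
    (by decide +kernel)

theorem ex42 : ∃ σ : Equiv.Perm (Fin 42), Bicrucial σ :=
  explB_spec (N := 6021356256299978133084272855661047456719934379199904888639031528473334738252538062690183887657895426)
    (lsL := [2, 4]) (mL := 3) (ML := 7) (lsR := [2, 4, 8, 16]) (mR := 15) (MR := 31)
    (by decide +kernel)

theorem ex44 : ∃ σ : Equiv.Perm (Fin 44), Bicrucial σ :=
  explB_spec (N := 1439339546465248674707874299416817212083025103568822643976950834136604883963884425977187682754299228195841)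
    (lsL := [2, 8]) (mL := 7) (ML := 15) (lsR := [2, 4, 8, 16]) (mR := 15) (MR := 31)
    (by decide +kernel)

theorem ex46 : ∃ σ : Equiv.Perm (Fin 46), Bicrucial σ :=
  explB_spec (N := 30558613926053046720778553272439322179526721635317813618452749283262529790641835624774820947677965207693168130)
    (lsL := [2, 8]) (mL := 7) (ML := 15) (lsR := [2, 4, 8, 16]) (mR := 15) (MR := 31)
    (by decide +kernel)

theorem ex48 : ∃ σ : Equiv.Perm (Fin 48), Bicrucial σ :=
  explB_spec (N := 6338244723754804473304752397358265426072929410602812224499499168076717033139589960498439907475418056212166241289988)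
    (lsL := [2, 4]) (mL := 3) (ML := 7) (lsR := [2, 4, 8, 16]) (mR := 15) (MR := 31)
    (by decide +kernel)

theorem ex50 : ∃ σ : Equiv.Perm (Fin 50), Bicrucial σ :=
  explB_spec (N := 111074417836595553598671275174774820538139404505198258012375089405134306663633853514317748980787630283512011061532558850)
    (lsL := [2, 4]) (mL := 3) (ML := 7) (lsR := [2, 4, 8, 16]) (mR := 15) (MR := 31)
    (by decide +kernel)

theorem ex52 : ∃ σ : Equiv.Perm (Fin 52), Bicrucial σ :=
  explB_spec (N := 29877147183125222144842970602866641963974582769260804773179843863093897861339005654600501826154273204697889779400570177326336)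
    (lsL := [2, 8]) (mL := 7) (ML := 15) (lsR := [2, 4, 8, 16]) (mR := 15) (MR := 31)
    (by decide +kernel)

theorem ex54 : ∃ σ : Equiv.Perm (Fin 54), Bicrucial σ :=
  explB_spec (N := 563706930341197213774064907326336743919923403601202762242808157769255269526807522710427786636147545644732330973815006687310646786)
    (lsL := [2, 8]) (mL := 7) (ML := 15) (lsR := [2, 4, 8, 16]) (mR := 15) (MR := 31)
    (by decide +kernel)

theorem ex56 : ∃ σ : Equiv.Perm (Fin 56), Bicrucial σ :=
  explB_spec (N := 139722761802957930860119044534435936686189731773015446055062923362989462326754474187809471678824970701572702125067335353985208280286980)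
    (lsL := [2, 4]) (mL := 3) (ML := 7) (lsR := [2, 4, 8, 16]) (mR := 15) (MR := 31)
    (by decide +kernel)

theorem ex58 : ∃ σ : Equiv.Perm (Fin 58), Bicrucial σ :=
  explB_spec (N := 2048961358967957543516658764999981278624603886918912302160007137690177012101162832944327844145390925579112262490316702449720639311059355138)
    (lsL := [2, 4]) (mL := 3) (ML := 7) (lsR := [2, 4, 8, 16]) (mR := 15) (MR := 31)
    (by decide +kernel)

theorem ex60 : ∃ σ : Equiv.Perm (Fin 60), Bicrucial σ :=
  explB_spec (N := 649073297161341402933634128859318252653076656378041778915248242787210340140811499163650382454835096719843093704889636604878530747110795863002880)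
    (lsL := [2, 8]) (mL := 7) (ML := 15) (lsR := [2, 4, 8, 16]) (mR := 15) (MR := 31)
    (by decide +kernel)

theorem ex62 : ∃ σ : Equiv.Perm (Fin 62), Bicrucial σ :=
  explB_spec (N := 10398557476580482734284841704747481821589258308286286976528929726283498969034247566396786362362373744491936859455216583901063617501365583067709443586)
    (lsL := [2, 8]) (mL := 7) (ML := 15) (lsR := [2, 4, 8, 16]) (mR := 15) (MR := 31)
    (by decide +kernel)

theorem ex64 : ∃ σ : Equiv.Perm (Fin 64), Bicrucial σ :=
  explB_spec (N := 2998067139778656405789917434519281207347664276414454852276665498772012709258458208608234866685214641552782647524344101013485390408404087094694964357367556)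
    (lsL := [2, 4]) (mL := 3) (ML := 7) (lsR := [2, 4, 8, 16]) (mR := 15) (MR := 31)
    (by decide +kernel)

theorem ex66 : ∃ σ : Equiv.Perm (Fin 66), Bicrucial σ :=
  explB_spec (N := 37796665805802040056158835017248540046205674300428605092666959408026879510537013285676958075391277571036949254738989153070596214037229320328850325095064012290)
    (lsL := [2, 4]) (mL := 3) (ML := 7) (lsR := [2, 4, 8, 16]) (mR := 15) (MR := 31)
    (by decide +kernel)

theorem ex68 : ∃ σ : Equiv.Perm (Fin 68), Bicrucial σ :=
  explB_spec (N := 13779911635309086627178402667151863650513178995530804092401089963042234365935346878569703960544979650868466425940793664582139683757510725319826167897315293717860608)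
    (lsL := [2, 8]) (mL := 7) (ML := 15) (lsR := [2, 4, 8, 16]) (mR := 15) (MR := 31)
    (by decide +kernel)

theorem ex70 : ∃ σ : Equiv.Perm (Fin 70), Bicrucial σ :=
  explB_spec (N := 191819528506239169447724301288965734289984664742510453034056654630819638234125786740235653372836327608356908290781315593155908069093220105625575068556712195316947619330)
    (lsL := [2, 8]) (mL := 7) (ML := 15) (lsR := [2, 4, 8, 16]) (mR := 15) (MR := 31)
    (by decide +kernel)

theorem ex76 : ∃ σ : Equiv.Perm (Fin 76), Bicrucial σ :=
  explB_spec (N := 287520808726519478377346589130236508845347148439368350514983072137531384510735270962768473710999182582098834313608837349226818886111824674295973509958849977234410589206910163599102720)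
    (lsL := [2, 8]) (mL := 7) (ML := 15) (lsR := [2, 4, 8, 16]) (mR := 15) (MR := 31)
    (by decide +kernel)

theorem fam0 (s n : ℕ) (hn : n = 72 + 8 * s) : ∃ σ : Equiv.Perm (Fin n), Bicrucial σ :=
  famB_spec (A := 4295164930)
    (G := 956311488950859342474295900655563754492283021337436990577862772617445378)
    (a := 5) (b := 30) (p := 3) (W := 42)
    (lsL := [2, 4]) (mL := 3) (ML := 7) (lsR := [2, 4, 8, 16]) (mR := 15) (MR := 31)
    (by decide +kernel) s n hn

theorem fam1 (s n : ℕ) (hn : n = 41 + 8 * s) : ∃ σ : Equiv.Perm (Fin n), Bicrucial σ :=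
  famB_spec (A := 17180001025)
    (G := 538942668410)
    (a := 5) (b := 5) (p := 0) (W := 36)
    (lsL := [2, 4]) (mL := 3) (ML := 7) (lsR := [2, 4]) (mR := 3) (MR := 7)
    (by decide +kernel) s n hn

theorem fam2 (s n : ℕ) (hn : n = 74 + 8 * s) : ∃ σ : Equiv.Perm (Fin n), Bicrucial σ :=
  famB_spec (A := 17180001025)
    (G := 41437441747522396584507393881613760327943179229292388707851599139798138)
    (a := 5) (b := 30) (p := 0) (W := 44)
    (lsL := [2, 4]) (mL := 3) (ML := 7) (lsR := [2, 4, 8, 16]) (mR := 15) (MR := 31)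
    (by decide +kernel) s n hn

theorem fam3 (s n : ℕ) (hn : n = 43 + 8 * s) : ∃ σ : Equiv.Perm (Fin n), Bicrucial σ :=
  famB_spec (A := 4295164930)
    (G := 1242093210705757374806906)
    (a := 5) (b := 11) (p := 3) (W := 32)
    (lsL := [2, 4]) (mL := 3) (ML := 7) (lsR := [2, 8]) (mR := 7) (MR := 15)
    (by decide +kernel) s n hn

theorem fam4 (s n : ℕ) (hn : n = 84 + 8 * s) : ∃ σ : Equiv.Perm (Fin n), Bicrucial σ :=
  famB_spec (A := 636025717232903693383835707490840320)
    (G := 956311488950859342474295900655563754492283021337436990577862772617445378)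
    (a := 15) (b := 30) (p := 1) (W := 54)
    (lsL := [2, 8]) (mL := 7) (ML := 15) (lsR := [2, 4, 8, 16]) (mR := 15) (MR := 31)
    (by decide +kernel) s n hn

theorem fam5 (s n : ℕ) (hn : n = 37 + 8 * s) : ∃ σ : Equiv.Perm (Fin n), Bicrucial σ :=
  famB_spec (A := 4295164930)
    (G := 534630858365)
    (a := 5) (b := 5) (p := 3) (W := 32)
    (lsL := [2, 4]) (mL := 3) (ML := 7) (lsR := [2, 4]) (mR := 3) (MR := 7)
    (by decide +kernel) s n hn

theorem fam6 (s n : ℕ) (hn : n = 78 + 8 * s) : ∃ σ : Equiv.Perm (Fin n), Bicrucial σ :=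
  famB_spec (A := 148069948645180255053940481)
    (G := 41437441747522396584507393881613760327943179229292388707851599139798138)
    (a := 11) (b := 30) (p := 2) (W := 48)
    (lsL := [2, 8]) (mL := 7) (ML := 15) (lsR := [2, 4, 8, 16]) (mR := 15) (MR := 31)
    (by decide +kernel) s n hn

theorem fam7 (s n : ℕ) (hn : n = 39 + 8 * s) : ∃ σ : Equiv.Perm (Fin n), Bicrucial σ :=
  famB_spec (A := 4295164930)
    (G := 4345430020)
    (a := 5) (b := 5) (p := 3) (W := 34)
    (lsL := [2, 4]) (mL := 3) (ML := 7) (lsR := [2, 4]) (mR := 3) (MR := 7)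
    (by decide +kernel) s n hn

theorem exists_all {n : ℕ} (h : n = 9 ∨ (Odd n ∧ 13 ≤ n) ∨ (Even n ∧ 32 ≤ n ∧ n ≠ 38)) :
    ∃ σ : Equiv.Perm (Fin n), Bicrucial σ := by
  rw [Nat.odd_iff, Nat.even_iff] at h
  rcases (by omega : n % 8 = 0 ∨ n % 8 = 1 ∨ n % 8 = 2 ∨ n % 8 = 3 ∨ n % 8 = 4 ∨ n % 8 = 5 ∨ n % 8 = 6 ∨ n % 8 = 7) with
    hr | hr | hr | hr | hr | hr | hr | hr
  · by_cases hk : 72 ≤ n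
    · exact fam0 ((n - 72) / 8) n (by omega)
    by_cases e32 : n = 32
    · exact e32 ▸ ex32
    by_cases e40 : n = 40
    · exact e40 ▸ ex40
    by_cases e48 : n = 48
    · exact e48 ▸ ex48
    by_cases e56 : n = 56
    · exact e56 ▸ ex56
    by_cases e64 : n = 64
    · exact e64 ▸ ex64
    omega
  · by_cases hk : 41 ≤ n
    · exact fam1 ((n - 41) / 8) n (by omega)
    by_cases e9 : n = 9
    · exact e9 ▸ ex9
    by_cases e17 : n = 17
    · exact e17 ▸ ex17
    by_cases e25 : n = 25
    · exact e25 ▸ ex25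
    by_cases e33 : n = 33
    · exact e33 ▸ ex33
    omega
  · by_cases hk : 74 ≤ n
    · exact fam2 ((n - 74) / 8) n (by omega)
    by_cases e34 : n = 34
    · exact e34 ▸ ex34
    by_cases e42 : n = 42
    · exact e42 ▸ ex42
    by_cases e50 : n = 50
    · exact e50 ▸ ex50
    by_cases e58 : n = 58
    · exact e58 ▸ ex58
    by_cases e66 : n = 66
    · exact e66 ▸ ex66
    omega
  · by_cases hk : 43 ≤ n
    · exact fam3 ((n - 43) / 8) n (by omega)
    by_cases e19 : n = 19
    · exact e19 ▸ ex19
    by_cases e27 : n = 27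
    · exact e27 ▸ ex27
    by_cases e35 : n = 35
    · exact e35 ▸ ex35
    omega
  · by_cases hk : 84 ≤ n
    · exact fam4 ((n - 84) / 8) n (by omega)
    by_cases e36 : n = 36
    · exact e36 ▸ ex36
    by_cases e44 : n = 44
    · exact e44 ▸ ex44
    by_cases e52 : n = 52
    · exact e52 ▸ ex52
    by_cases e60 : n = 60
    · exact e60 ▸ ex60
    by_cases e68 : n = 68
    · exact e68 ▸ ex68
    by_cases e76 : n = 76
    · exact e76 ▸ ex76
    omega
  · by_cases hk : 37 ≤ n
    · exact fam5 ((n - 37) / 8) n (by omega)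
    by_cases e13 : n = 13
    · exact e13 ▸ ex13
    by_cases e21 : n = 21
    · exact e21 ▸ ex21
    by_cases e29 : n = 29
    · exact e29 ▸ ex29
    omega
  · by_cases hk : 78 ≤ n
    · exact fam6 ((n - 78) / 8) n (by omega)
    by_cases e46 : n = 46
    · exact e46 ▸ ex46
    by_cases e54 : n = 54
    · exact e54 ▸ ex54
    by_cases e62 : n = 62
    · exact e62 ▸ ex62
    by_cases e70 : n = 70
    · exact e70 ▸ ex70
    omega
  · by_cases hk : 39 ≤ n
    · exact fam7 ((n - 39) / 8) n (by omega)
    by_cases e15 : n = 15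
    · exact e15 ▸ ex15
    by_cases e23 : n = 23
    · exact e23 ▸ ex23
    by_cases e31 : n = 31
    · exact e31 ▸ ex31
    omega

end BC
/-- A bicrucial permutation of length `n` exists if and only if `n = 9`,
or `n` is odd with `n ≥ 13`, or `n` is even with `n ≥ 32` and `n ≠ 38`. -/
theorem bicrucial_exists_iff (n : ℕ) :
    (∃ σ : Equiv.Perm (Fin n), Bicrucial σ) ↔
      (n = 9 ∨ (Odd n ∧ 13 ≤ n) ∨ (Even n ∧ 32 ≤ n ∧ n ≠ 38)) := by
  constructor
  · rintro ⟨σ, h⟩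
    exact (BC.good_of_bicrucial h).length
  · exact BC.exists_all
end

section
/- For every integer k ≥ 3, there exists a bicrucial permutation of length 8k + 3. -/
/-- Toeplitz-type base sequence. -/
def baseSeq (i : ℕ) : ℚ :=
  if h : i % 2 = 1 then baseSeq (i / 2) / 2 else if i % 4 = 0 then 1 else -1
termination_by i
decreasing_by omega

/-- Strict order on positions from a key sequence, ties broken by position. -/
def KLt (V : ℕ → ℚ) (i j : ℕ) : Prop := V i < V j ∨ (V i = V j ∧ i < j)

lemma base_odd (r : ℕ) : baseSeq (2 * r + 1) = baseSeq r / 2 := by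
  rw [baseSeq, dif_pos (by omega)]
  congr 2
  omega

lemma base_zero (i : ℕ) (h : i % 4 = 0) : baseSeq i = 1 := by
  rw [baseSeq, dif_neg (by omega), if_pos h]

lemma base_two (i : ℕ) (h : i % 4 = 2) : baseSeq i = -1 := by
  rw [baseSeq, dif_neg (by omega), if_neg (by omega)]

lemma base_bound (i : ℕ) : -1 ≤ baseSeq i ∧ baseSeq i ≤ 1 := by
  induction i using Nat.strong_induction_on with
  | _ i ih =>
    by_cases h : i % 2 = 1
    · obtain ⟨r, rfl⟩ : ∃ r, i = 2 * r + 1 := ⟨i / 2, by omega⟩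
      have := ih r (by omega)
      rw [base_odd]
      constructor <;> linarith
    · by_cases h4 : i % 4 = 0
      · rw [base_zero i h4]; norm_num
      · rw [base_two i (by omega)]; norm_num

lemma base_odd_bound (i : ℕ) (h : i % 2 = 1) : -(1/2) ≤ baseSeq i ∧ baseSeq i ≤ 1/2 := by
  obtain ⟨r, rfl⟩ : ∃ r, i = 2 * r + 1 := ⟨i / 2, by omega⟩
  have := base_bound r
  rw [base_odd]
  constructor <;> linarith

lemma KLt_of_lt {V : ℕ → ℚ} {i j : ℕ} (h : V i < V j) : KLt V i j := Or.inl h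

lemma not_KLt_of_lt {V : ℕ → ℚ} {i j : ℕ} (h : V j < V i) : ¬ KLt V i j := by
  rintro (h1 | ⟨h1, -⟩) <;> linarith

lemma base_step (i : ℕ) : KLt baseSeq i (i + 1) ↔ 2 ≤ i % 4 := by
  have h4 : i % 4 = 0 ∨ i % 4 = 1 ∨ i % 4 = 2 ∨ i % 4 = 3 := by omega
  rcases h4 with h | h | h | h
  · refine iff_of_false (not_KLt_of_lt ?_) (by omega)
    have := base_odd_bound (i + 1) (by omega)
    rw [base_zero i h]; linarith
  · refine iff_of_false (not_KLt_of_lt ?_) (by omega)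
    have := base_odd_bound i (by omega)
    rw [base_two (i + 1) (by omega)]; linarith
  · refine iff_of_true (KLt_of_lt ?_) (by omega)
    have := base_odd_bound (i + 1) (by omega)
    rw [base_two i h]; linarith
  · refine iff_of_true (KLt_of_lt ?_) (by omega)
    have := base_odd_bound i (by omega)
    rw [base_zero (i + 1) (by omega)]; linarith

lemma base_KLt_odd (i j : ℕ) :
    KLt baseSeq (2 * i + 1) (2 * j + 1) ↔ KLt baseSeq i j := by
  unfold KLt
  rw [base_odd, base_odd, div_lt_div_iff_of_pos_right (by norm_num), div_left_inj' (by norm_num)]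
  have : 2 * i + 1 < 2 * j + 1 ↔ i < j := by omega
  rw [this]

/-- Squares in terms of keys. -/
def KSq (V : ℕ → ℚ) (s l : ℕ) : Prop :=
  ∀ i j, i < l → j < l → (KLt V (s + i) (s + j) ↔ KLt V (s + l + i) (s + l + j))

lemma base_squarefree (l : ℕ) : ∀ s, 2 ≤ l → ¬ KSq baseSeq s l := by
  induction l using Nat.strong_induction_on with
  | _ l ih =>
    intro s hl H
    have h1 := H 0 1 (by omega) (by omega)
    simp only [add_zero] at h1
    rw [base_step, base_step] at h1
    by_cases h2 : l = 2
    · subst h2; omega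
    have h3 := H 1 2 (by omega) (by omega)
    have e1 := base_step (s + 1)
    have e2 := base_step (s + l + 1)
    rw [show s + 1 + 1 = s + 2 from rfl] at e1
    rw [show s + l + 1 + 1 = s + l + 2 from rfl] at e2
    rw [e1, e2] at h3
    have h4 : l % 4 = 0 := by omega
    refine ih (l / 2) (by omega) (s / 2) (by omega) ?_
    intro i j hi hj
    have h5 := H (2 * i + (1 - s % 2)) (2 * j + (1 - s % 2)) (by omega) (by omega)
    rw [← base_KLt_odd, ← base_KLt_odd (s / 2 + l / 2 + i)]
    convert h5 using 2 <;> omega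

/-- The key sequence of the bicrucial permutation of length `N + 1`. -/
def keySeq (N i : ℕ) : ℚ :=
  if i = 0 ∨ i = 8 ∨ i = N then 2 else if i = 7 then 3 else if i = 2 then 0 else baseSeq (i + 1)

lemma key_super (N i : ℕ) (h : i = 0 ∨ i = 8 ∨ i = N) : keySeq N i = 2 := by
  rw [keySeq, if_pos h]

lemma key_seven (N : ℕ) (h : 7 < N) : keySeq N 7 = 3 := by
  rw [keySeq, if_neg (by omega), if_pos rfl]

lemma key_two (N : ℕ) (h : 7 < N) : keySeq N 2 = 0 := by
  rw [keySeq, if_neg (by omega), if_neg (by omega), if_pos rfl]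

lemma key_reg (N i : ℕ) (h : i ≠ 0 ∧ i ≠ 8 ∧ i ≠ N ∧ i ≠ 7 ∧ i ≠ 2) :
    keySeq N i = baseSeq (i + 1) := by
  rw [keySeq, if_neg (by omega), if_neg (by omega), if_neg (by omega)]

lemma key_valley (N i : ℕ) (hN : N % 4 = 2) (h : i % 4 = 1) : keySeq N i = -1 := by
  rw [key_reg N i (by omega), base_two _ (by omega)]

lemma key_peak (N i : ℕ) (hN : N % 4 = 2) (h : i % 4 = 3) (h7 : i ≠ 7) : keySeq N i = 1 := by
  rw [key_reg N i (by omega), base_zero _ (by omega)]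

lemma key_peak_ge (N i : ℕ) (hN : N % 4 = 2) (hN' : 7 < N) (h : i % 4 = 3) : 1 ≤ keySeq N i := by
  by_cases h7 : i = 7
  · subst h7; rw [key_seven N hN']; norm_num
  · rw [key_peak N i hN h h7]

lemma key_mid_hi (N i : ℕ) (hN : N % 4 = 2) (h : i % 8 = 0) (h0 : i ≠ 0) (h8 : i ≠ 8) :
    keySeq N i = 1/2 := by
  rw [key_reg N i (by omega)]
  obtain ⟨r, rfl⟩ : ∃ r, i = 2 * r := ⟨i / 2, by omega⟩
  rw [base_odd, base_zero _ (by omega)]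

lemma key_mid_lo (N i : ℕ) (hN : N % 4 = 2) (h : i % 8 = 4) : keySeq N i = -1/2 := by
  rw [key_reg N i (by omega)]
  obtain ⟨r, rfl⟩ : ∃ r, i = 2 * r := ⟨i / 2, by omega⟩
  rw [base_odd, base_two _ (by omega)]

lemma key_mid_mid (N i : ℕ) (hN' : 7 < N) (h : i % 4 = 2) (h8 : i ≠ N) :
    -(1/4) ≤ keySeq N i ∧ keySeq N i ≤ 1/4 := by
  by_cases h2 : i = 2
  · subst h2; rw [key_two N hN']; norm_num
  rw [key_reg N i (by omega)]
  obtain ⟨r, rfl⟩ : ∃ r, i = 2 * r := ⟨i / 2, by omega⟩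
  rw [base_odd]
  have := base_odd_bound r (by omega)
  constructor <;> linarith

/-- Regular mids have absolute value at most 1/2. -/
lemma key_mid (N i : ℕ) (hN : N % 4 = 2) (hN' : 7 < N) (h : i % 2 = 0)
    (h0 : i ≠ 0) (h8 : i ≠ 8) (hiN : i ≠ N) :
    -(1/2) ≤ keySeq N i ∧ keySeq N i ≤ 1/2 := by
  have h4 : i % 8 = 0 ∨ i % 8 = 4 ∨ i % 4 = 2 := by omega
  rcases h4 with h | h | h
  · rw [key_mid_hi N i hN h h0 h8]; norm_num
  · rw [key_mid_lo N i hN h]; norm_num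
  · have := key_mid_mid N i hN' h hiN
    constructor <;> linarith

lemma key_mid_gt (N i : ℕ) (hN : N % 4 = 2) (hN' : 7 < N) (h : i % 2 = 0) :
    -1 < keySeq N i := by
  by_cases hs : i = 0 ∨ i = 8 ∨ i = N
  · rw [key_super N i hs]; norm_num
  · have := key_mid N i hN hN' h (by omega) (by omega) (by omega)
    linarith

lemma key_step (N i : ℕ) (hN : N % 4 = 2) (hN' : 8 < N) (hi : i < N) :
    KLt (keySeq N) i (i + 1) ↔ (i % 4 = 1 ∨ i % 4 = 2) := by
  have h4 : i % 4 = 0 ∨ i % 4 = 1 ∨ i % 4 = 2 ∨ i % 4 = 3 := by omega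
  rcases h4 with h | h | h | h
  · refine iff_of_false (not_KLt_of_lt ?_) (by omega)
    rw [key_valley N (i + 1) hN (by omega)]
    exact key_mid_gt N i hN (by omega) (by omega)
  · refine iff_of_true (KLt_of_lt ?_) (by omega)
    rw [key_valley N i hN h]
    exact key_mid_gt N (i + 1) hN (by omega) (by omega)
  · refine iff_of_true (KLt_of_lt ?_) (by omega)
    have h1 := key_peak_ge N (i + 1) hN (by omega) (by omega)
    have h2 := key_mid_mid N i (by omega) h (by omega)
    linarith
  · refine iff_of_false (not_KLt_of_lt ?_) (by omega)
    by_cases h7 : i = 7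
    · subst h7
      rw [key_seven N (by omega), key_super N (7 + 1) (by omega)]; norm_num
    have h1 := key_peak_ge N i hN (by omega) (by omega)
    have h2 := key_mid N (i + 1) hN (by omega) (by omega) (by omega) (by omega) (by omega)
    linarith

lemma key_mid_step (N i : ℕ) (hN : N % 4 = 2) (hN' : 8 < N) (hi : i + 2 < N) (h : i % 2 = 0) :
    KLt (keySeq N) i (i + 2) ↔ 4 ≤ i % 8 := by
  have h4 : i % 8 = 0 ∨ i % 8 = 2 ∨ i % 8 = 4 ∨ i % 8 = 6 := by omega
  have hhi : ∀ a, a % 8 = 0 → 1/2 ≤ keySeq N a := by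
    intro a ha
    by_cases hs : a = 0 ∨ a = 8
    · rw [key_super N a (by omega)]; norm_num
    · rw [key_mid_hi N a hN ha (by omega) (by omega)]
  rcases h4 with h | h | h | h
  · refine iff_of_false (not_KLt_of_lt ?_) (by omega)
    have h1 := hhi i h
    have h2 := key_mid_mid N (i + 2) (by omega) (by omega) (by omega)
    linarith
  · refine iff_of_false (not_KLt_of_lt ?_) (by omega)
    have h2 := key_mid_mid N i (by omega) (by omega) (by omega)
    rw [key_mid_lo N (i + 2) hN (by omega)]
    linarith
  · refine iff_of_true (KLt_of_lt ?_) (by omega)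
    have h2 := key_mid_mid N (i + 2) (by omega) (by omega) (by omega)
    rw [key_mid_lo N i hN (by omega)]
    linarith
  · refine iff_of_true (KLt_of_lt ?_) (by omega)
    have h1 := hhi (i + 2) (by omega)
    have h2 := key_mid_mid N i (by omega) (by omega) (by omega)
    linarith

/-- Transfer of a comparison across a square, with absolute positions. -/
lemma KSq.at {V : ℕ → ℚ} {s l : ℕ} (H : KSq V s l) (a b : ℕ) (ha : s ≤ a) (ha' : a < s + l)
    (hb : s ≤ b) (hb' : b < s + l) : KLt V a b ↔ KLt V (a + l) (b + l) := by
  have := H (a - s) (b - s) (by omega) (by omega)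
  convert this using 2 <;> omega

lemma key_peak_not_lt (N a b : ℕ) (hN : N % 4 = 2) (hN' : 8 < N) (ha : a % 4 = 3)
    (h : b % 2 = 0) (h0 : b ≠ 0) (h8 : b ≠ 8) (hiN : b ≠ N) : ¬ KLt (keySeq N) a b := by
  apply not_KLt_of_lt
  have h1 := key_peak_ge N a hN (by omega) ha
  have h2 := key_mid N b hN (by omega) h h0 h8 hiN
  linarith

lemma key_squarefree (N s l : ℕ) (hN : N % 8 = 2) (hN' : 18 ≤ N) (hl : 2 ≤ l)
    (hs : s + 2 * l ≤ N + 1) : ¬ KSq (keySeq N) s l := by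
  intro H
  have hN4 : N % 4 = 2 := by omega
  have h1 := H.at s (s + 1) (by omega) (by omega) (by omega) (by omega)
  rw [show s + 1 + l = s + l + 1 by omega, key_step N _ hN4 (by omega) (by omega),
    key_step N _ hN4 (by omega) (by omega)] at h1
  by_cases h2 : l = 2
  · subst h2; omega
  have h3 := H.at (s + 1) (s + 1 + 1) (by omega) (by omega) (by omega) (by omega)
  rw [show s + 1 + 1 + l = s + 1 + l + 1 by omega, key_step N _ hN4 (by omega) (by omega),
    key_step N _ hN4 (by omega) (by omega)] at h3
  have h4 : l % 4 = 0 := by omega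
  clear h1 h3
  by_cases hl4 : l = 4
  · subst hl4
    by_cases hsN : s = N - 7
    · have h5 := H.at s (s + 3) (by omega) (by omega) (by omega) (by omega)
      refine key_peak_not_lt N s (s + 3) hN4 (by omega) (by omega) (by omega) (by omega)
        (by omega) (by omega) (h5.2 (KLt_of_lt ?_))
      rw [key_super N (s + 3 + 4) (by omega), key_peak N (s + 4) hN4 (by omega) (by omega)]
      norm_num
    · obtain ⟨e, he, he1, he2⟩ : ∃ e, e % 2 = 0 ∧ s ≤ e ∧ e ≤ s + 1 := ⟨s + s % 2, by omega⟩
      have h5 := H.at e (e + 2) (by omega) (by omega) (by omega) (by omega)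
      rw [show e + 2 + 4 = e + 4 + 2 by omega,
        key_mid_step N e hN4 (by omega) (by omega) (by omega),
        key_mid_step N (e + 4) hN4 (by omega) (by omega) (by omega)] at h5
      omega
  by_cases hs8 : 8 < s
  · by_cases hlast : s + 2 * l = N + 1
    · have h5 := H.at (N - l - 3) (N - l) (by omega) (by omega) (by omega) (by omega)
      refine key_peak_not_lt N (N - l - 3) (N - l) hN4 (by omega) (by omega) (by omega) (by omega)
        (by omega) (by omega) (h5.2 (KLt_of_lt ?_))
      rw [key_super N (N - l + l) (by omega), key_peak N (N - l - 3 + l) hN4 (by omega) (by omega)]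
      norm_num
    · refine base_squarefree l (s + 1) hl ?_
      have hreg : ∀ a b, 8 < a → a < N → 8 < b → b < N →
          (KLt (keySeq N) a b ↔ KLt baseSeq (a + 1) (b + 1)) := by
        intro a b ha ha' hb hb'
        unfold KLt
        rw [key_reg N a (by omega), key_reg N b (by omega)]
        have : a < b ↔ a + 1 < b + 1 := by omega
        rw [this]
      intro i j hi hj
      have h5 := H i j hi hj
      rw [hreg _ _ (by omega) (by omega) (by omega) (by omega),
        hreg _ _ (by omega) (by omega) (by omega) (by omega)] at h5
      convert h5 using 2 <;> omega
  by_cases hA : 11 < s + l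
  · have h5 := H.at 11 8 (by omega) (by omega) (by omega) (by omega)
    refine key_peak_not_lt N (11 + l) (8 + l) hN4 (by omega) (by omega) (by omega) (by omega)
        (by omega) (by omega) (h5.1 (KLt_of_lt ?_))
    rw [key_super N 8 (by omega), key_peak N 11 hN4 (by omega) (by omega)]
    norm_num
  have hl8 : l = 8 := by omega
  subst hl8
  by_cases hs0 : s = 0
  · have h5 := H.at 0 7 (by omega) (by omega) (by omega) (by omega)
    refine absurd (h5.1 (KLt_of_lt ?_)) (not_KLt_of_lt ?_)
    · rw [key_super N 0 (by omega), key_seven N (by omega)]; norm_num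
    · rw [key_super N (0 + 8) (by omega), key_peak N (7 + 8) hN4 (by omega) (by omega)]; norm_num
  · have h5 := H.at 3 8 (by omega) (by omega) (by omega) (by omega)
    refine key_peak_not_lt N (3 + 8) (8 + 8) hN4 (by omega) (by omega) (by omega) (by omega)
        (by omega) (by omega) (h5.1 (KLt_of_lt ?_))
    rw [key_super N 8 (by omega), key_peak N 3 hN4 (by omega) (by omega)]
    norm_num

/-- A key sequence yields a permutation. -/
lemma exists_perm (V : ℕ → ℚ) (n : ℕ) :
    ∃ σ : Equiv.Perm (Fin n), ∀ i j : Fin n, σ i < σ j ↔ KLt V i j := by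
  let f : Fin n → ℚ ×ₗ ℕ := fun i => toLex (V i, (i : ℕ))
  have hf : Function.Injective f := by
    intro i j h
    have h' : (V i, (i : ℕ)) = (V j, (j : ℕ)) := toLex.injective h
    exact Fin.ext (Prod.ext_iff.1 h').2
  have hm : StrictMono (f ∘ Tuple.sort f) :=
    (Tuple.monotone_sort f).strictMono_of_injective (hf.comp (Tuple.sort f).injective)
  refine ⟨(Tuple.sort f).symm, fun i j => ?_⟩
  rw [← hm.lt_iff_lt]
  simp only [Function.comp_apply, Equiv.apply_symm_apply]
  simp only [f, Prod.Lex.toLex_lt_toLex, KLt]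

/-- Pattern of the first fifteen keys. -/
lemma key_initial (N : ℕ) (hN : N % 8 = 2) (hN' : 18 ≤ N) (i j : ℕ) (hi : i < 7) (hj : j < 7) :
    KLt (keySeq N) i j ↔ KLt (keySeq N) (i + 8) (j + 8) := by
  have hN4 : N % 4 = 2 := by omega
  have b1 : baseSeq 7 = 1/4 * (1/2) := by
    rw [baseSeq, dif_pos (by omega), baseSeq, dif_pos (by omega), baseSeq, dif_pos (by omega),
      base_zero _ (by omega)]; norm_num
  have b2 : baseSeq 11 = -1/4 := by
    rw [baseSeq, dif_pos (by omega), baseSeq, dif_pos (by omega), base_two _ (by omega)]; norm_num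
  have b3 : baseSeq 15 = 1/16 := by
    rw [baseSeq, dif_pos (by omega), baseSeq, dif_pos (by omega), baseSeq, dif_pos (by omega),
      baseSeq, dif_pos (by omega), base_zero _ (by omega)]; norm_num
  have v0 := key_super N 0 (by omega)
  have v1 := key_valley N 1 hN4 (by omega)
  have v2 := key_two N (by omega)
  have v3 := key_peak N 3 hN4 (by omega) (by omega)
  have v4 := key_mid_lo N 4 hN4 (by omega)
  have v5 := key_valley N 5 hN4 (by omega)
  have v6 : keySeq N 6 = 1/8 := by rw [key_reg N 6 (by omega), b1]; norm_num
  have v8 := key_super N 8 (by omega)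
  have v9 := key_valley N 9 hN4 (by omega)
  have v10 : keySeq N 10 = -1/4 := by rw [key_reg N 10 (by omega), b2]
  have v11 := key_peak N 11 hN4 (by omega) (by omega)
  have v12 := key_mid_lo N 12 hN4 (by omega)
  have v13 := key_valley N 13 hN4 (by omega)
  have v14 : keySeq N 14 = 1/16 := by rw [key_reg N 14 (by omega), b3]
  unfold KLt
  interval_cases i <;> interval_cases j <;>
    norm_num [v0, v1, v2, v3, v4, v5, v6, v8, v9, v10, v11, v12, v13, v14]


lemma key_top_zero (N : ℕ) (hN : N % 8 = 2) (hN' : 18 ≤ N) (j : ℕ) (hj : j < 7) :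
    ¬ KLt (keySeq N) 0 j := by
  have hN4 : N % 4 = 2 := by omega
  by_cases h0 : j = 0
  · subst h0
    rintro (h | ⟨-, h⟩)
    · exact lt_irrefl _ h
    · omega
  apply not_KLt_of_lt
  rw [key_super N 0 (by omega)]
  have h4 : j % 4 = 1 ∨ j % 4 = 3 ∨ j % 2 = 0 := by omega
  rcases h4 with h | h | h
  · rw [key_valley N j hN4 h]; norm_num
  · rw [key_peak N j hN4 h (by omega)]; norm_num
  · have := key_mid N j hN4 (by omega) h (by omega) (by omega) (by omega)
    linarith

lemma key_top_seven (N : ℕ) (hN : N % 8 = 2) (hN' : 18 ≤ N) (j : ℕ) (hj : j ≠ 7) :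
    keySeq N j < keySeq N 7 := by
  have hN4 : N % 4 = 2 := by omega
  rw [key_seven N (by omega)]
  by_cases h0 : j = 0 ∨ j = 8 ∨ j = N
  · rw [key_super N j (by omega)]; norm_num
  have h4 : j % 4 = 1 ∨ j % 4 = 3 ∨ j % 2 = 0 := by omega
  rcases h4 with h | h | h
  · rw [key_valley N j hN4 h]; norm_num
  · rw [key_peak N j hN4 h (by omega)]; norm_num
  · have := key_mid N j hN4 (by omega) h (by omega) (by omega) (by omega)
    linarith

/-- Every left-extension contains a square. -/
lemma left_ext (N : ℕ) (hN : N % 8 = 2) (hN' : 18 ≤ N) (π : Equiv.Perm (Fin (N + 1 + 1)))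
    (h : ∀ (a b : ℕ) (ha : a < N + 1 + 1) (hb : b < N + 1 + 1), 1 ≤ a → 1 ≤ b →
      (π ⟨a, ha⟩ < π ⟨b, hb⟩ ↔ KLt (keySeq N) (a - 1) (b - 1))) : ContainsSquare ⇑π := by
  have hN4 : N % 4 = 2 := by omega
  have hne : π ⟨0, by omega⟩ ≠ π ⟨1, by omega⟩ := by
    intro e
    have := π.injective e
    simp at this
  rcases lt_or_gt_of_ne hne with hx | hx
  · refine ⟨0, 2, le_rfl, by omega, ?_⟩
    have h23 : π ⟨2, by omega⟩ < π ⟨3, by omega⟩ := by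
      rw [h 2 3 (by omega) (by omega) (by omega) (by omega)]
      exact (key_step N 1 hN4 (by omega) (by omega)).2 (by omega)
    intro i j hi hj
    interval_cases i <;> interval_cases j
    · exact iff_of_false (lt_irrefl _) (lt_irrefl _)
    · exact iff_of_true hx h23
    · exact iff_of_false hx.asymm h23.asymm
    · exact iff_of_false (lt_irrefl _) (lt_irrefl _)
  · refine ⟨0, 8, by omega, by omega, ?_⟩
    have hle : ∀ j (hj : j < 8), 1 ≤ j → π ⟨0 + j, by omega⟩ < π ⟨0, by omega⟩ := by
      intro j hj hj1
      refine lt_of_le_of_lt (not_lt.1 ?_) hx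
      rw [h 1 (0 + j) (by omega) (by omega) (by omega) (by omega)]
      exact key_top_zero N hN hN' _ (by omega)
    intro i j hi hj
    rw [h (0 + 8 + i) (0 + 8 + j) (by omega) (by omega) (by omega) (by omega)]
    by_cases hi0 : i = 0
    · subst hi0
      by_cases hj0 : j = 0
      · subst hj0
        refine iff_of_false (lt_irrefl _) ?_
        rintro (h1 | ⟨-, h1⟩)
        · exact lt_irrefl _ h1
        · omega
      · exact iff_of_false (hle j hj (by omega)).asymm
          (not_KLt_of_lt (key_top_seven N hN hN' _ (by omega)))
    · by_cases hj0 : j = 0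
      · subst hj0
        exact iff_of_true (hle i hi (by omega)) (KLt_of_lt (key_top_seven N hN hN' _ (by omega)))
      · rw [h (0 + i) (0 + j) (by omega) (by omega) (by omega) (by omega),
          key_initial N hN hN' _ _ (by omega) (by omega)]
        rw [show 0 + i - 1 + 8 = 0 + 8 + i - 1 by omega, show 0 + j - 1 + 8 = 0 + 8 + j - 1 by omega]

/-- Every right-extension contains a square. -/
lemma right_ext (N : ℕ) (hN : N % 8 = 2) (hN' : 18 ≤ N) (π : Equiv.Perm (Fin (N + 1 + 1)))
    (h : ∀ (a b : ℕ) (ha : a < N + 1) (hb : b < N + 1),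
      (π ⟨a, by omega⟩ < π ⟨b, by omega⟩ ↔ KLt (keySeq N) a b)) : ContainsSquare ⇑π := by
  have hN4 : N % 4 = 2 := by omega
  obtain ⟨m, rfl⟩ : ∃ m, N = m + 6 := ⟨N - 6, by omega⟩
  have hlt : ∀ (a b : ℕ) (ha : a < m + 6 + 1) (hb : b < m + 6 + 1),
      keySeq (m + 6) a < keySeq (m + 6) b → π ⟨a, by omega⟩ < π ⟨b, by omega⟩ :=
    fun a b ha hb hab => (h a b ha hb).2 (KLt_of_lt hab)
  have v0 := key_mid_lo (m + 6) m hN4 (by omega)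
  have v1 := key_valley (m + 6) (m + 1) hN4 (by omega)
  have v2 := key_mid_mid (m + 6) (m + 2) (by omega) (by omega) (by omega)
  have v3 := key_peak (m + 6) (m + 3) hN4 (by omega) (by omega)
  have v4 := key_mid_hi (m + 6) (m + 4) hN4 (by omega) (by omega) (by omega)
  have v5 := key_valley (m + 6) (m + 5) hN4 (by omega)
  have v6 := key_super (m + 6) (m + 6) (by omega)
  have p10 := hlt (m + 1) m (by omega) (by omega) (by rw [v0, v1]; norm_num)
  have p02 := hlt m (m + 2) (by omega) (by omega) (by rw [v0]; linarith)
  have p23 := hlt (m + 2) (m + 3) (by omega) (by omega) (by rw [v3]; linarith)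
  have p54 := hlt (m + 5) (m + 4) (by omega) (by omega) (by rw [v4, v5]; norm_num)
  have p46 := hlt (m + 4) (m + 6) (by omega) (by omega) (by rw [v4, v6]; norm_num)
  have hne : π ⟨m + 7, by omega⟩ ≠ π ⟨m + 6, by omega⟩ := by
    intro e
    have := π.injective e
    simp at this
  rcases lt_or_gt_of_ne hne with hx | hx
  · refine ⟨m + 4, 2, le_rfl, by omega, ?_⟩
    intro i j hi hj
    interval_cases i <;> interval_cases j
    · exact iff_of_false (lt_irrefl _) (lt_irrefl _)
    · exact iff_of_false p54.asymm hx.asymm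
    · exact iff_of_true p54 hx
    · exact iff_of_false (lt_irrefl _) (lt_irrefl _)
  · refine ⟨m, 4, by omega, by omega, ?_⟩
    have p12 := p10.trans p02
    have p03 := p02.trans p23
    have p13 := p12.trans p23
    have p56 := p54.trans p46
    have p47 := p46.trans hx
    have p57 := p56.trans hx
    intro i j hi hj
    interval_cases i <;> interval_cases j
    · exact iff_of_false (lt_irrefl _) (lt_irrefl _)
    · exact iff_of_false p10.asymm p54.asymm
    · exact iff_of_true p02 p46
    · exact iff_of_true p03 p47
    · exact iff_of_true p10 p54
    · exact iff_of_false (lt_irrefl _) (lt_irrefl _)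
    · exact iff_of_true p12 p56
    · exact iff_of_true p13 p57
    · exact iff_of_false p02.asymm p46.asymm
    · exact iff_of_false p12.asymm p56.asymm
    · exact iff_of_false (lt_irrefl _) (lt_irrefl _)
    · exact iff_of_true p23 hx
    · exact iff_of_false p03.asymm p47.asymm
    · exact iff_of_false p13.asymm p57.asymm
    · exact iff_of_false p23.asymm hx.asymm
    · exact iff_of_false (lt_irrefl _) (lt_irrefl _)

/-- For every integer `k ≥ 3`, there exists a bicrucial permutation of length `8k + 3`. -/
theorem bicrucial_exists_8k_add_3 (k : ℕ) (hk : 3 ≤ k) :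
    ∃ σ : Equiv.Perm (Fin (8 * k + 3)), Bicrucial σ := by
  obtain ⟨σ, hσ⟩ := exists_perm (keySeq (8 * k + 2)) (8 * k + 3)
  have hsf : SquareFree ⇑σ := by
    rintro ⟨s, l, hl, hb, H⟩
    refine key_squarefree (8 * k + 2) s l (by omega) (by omega) hl (by omega) ?_
    intro i j hi hj
    have := H i j hi hj
    rwa [hσ, hσ] at this
  refine ⟨σ, ⟨hsf, fun π hπ => ?_⟩, ⟨hsf, fun π hπ => ?_⟩⟩
  · refine left_ext (8 * k + 2) (by omega) (by omega) π ?_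
    intro a b ha hb ha1 hb1
    obtain ⟨a, rfl⟩ : ∃ c, a = c + 1 := ⟨a - 1, by omega⟩
    obtain ⟨b, rfl⟩ : ∃ c, b = c + 1 := ⟨b - 1, by omega⟩
    have h1 := hπ ⟨a, by omega⟩ ⟨b, by omega⟩
    rw [hσ] at h1
    exact h1
  · refine right_ext (8 * k + 2) (by omega) (by omega) π ?_
    intro a b ha hb
    have h1 := hπ ⟨a, ha⟩ ⟨b, hb⟩
    rw [hσ] at h1
    exact h1
end

section
/- For every even integer n ≥ 48, there exists a bicrucial permutation of length n. -/
/-! ## The construction -/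

/-- The level function of the periodic-like middle part. -/
def G : ℕ → ℕ → ℕ
  | 0, _ => 0
  | K + 1, m => bif Nat.beq (m % 4) 1 then 2 * K + 2 else
      bif Nat.beq (m % 4) 3 then 0 else G K (m / 2) + 1

/-- Explicit ranks of the first 37 entries. -/
def headL : List ℕ := [33, 35, 36, 12, 11, 27, 34, 31, 26, 30, 32, 20, 13, 25, 29, 28, 19, 23, 24, 1, 0, 14, 21, 17, 9, 16, 18, 7, 2, 8, 15, 10, 5, 6, 22, 4, 3]

/-- Explicit values of the last entries, in the various cases. -/
def tailL : ℕ → List ℕ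
  | 0 => [1105, 1110, 1109, 1106, 1107, 1108, 1102, 1100, 1103, 1104, 1101]
  | 1 => [1100, 1110, 1109, 1103, 1104, 1108, 1102, 1101, 1106, 1111, 1107, 1105, 1112]
  | 2 => [1043, 1045, 1044, 1001, 1041, 1042, 801, 785, 802, 804, 803, 782, 783, 784, 781]
  | 3 => [1041, 1048, 1043, 783, 821, 1042, 782, 781, 1044, 1046, 1045, 824, 825, 826, 823, 822, 1047]
  | _ => [1041, 1043, 1042, 781, 784, 1044, 783, 782, 1045, 1053, 1050, 1046, 1049, 1051, 1048, 1047, 1052]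

/-- The head followed by an infinite middle part. -/
def codeInf (w : ℕ) : ℕ :=
  bif Nat.blt w 37 then headL.getD w 0 else 800 + 20 * G 6 (w - 37)

/-- The coarse values. -/
def code (t j w : ℕ) : ℕ :=
  bif Nat.blt w (37 + 8 * j) then codeInf w else (tailL t).getD (w - (37 + 8 * j)) 0

/-- The length of the permutation. -/
def len (t j : ℕ) : ℕ := 37 + 8 * j + (tailL t).length

/-- The fine values, separating entries with equal coarse values. -/
def fine (t j w : ℕ) : ℕ := if w < 37 + 8 * j then G (len t j) (w - 37) else 0

/-- The full key; the permutation is the ranking of the keys. -/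
def key (t j w : ℕ) : ℕ :=
  (code t j w * (2 * len t j + 1) + fine t j w) * len t j + w

/-- Which pairs of parameters are used. -/
def Valid (t j : ℕ) : Prop := t < 3 ∨ (t = 3 ∧ 1 ≤ j) ∨ (t = 4 ∧ j = 0)

/-! ## Basic facts about `G` -/

lemma G_one (K m : ℕ) (h : m % 4 = 1) : G (K + 1) m = 2 * K + 2 := by
  simp [G, h]

lemma G_three (K m : ℕ) (h : m % 4 = 3) : G (K + 1) m = 0 := by
  have h1 : Nat.beq 3 1 = false := rfl
  have h3 : Nat.beq 3 3 = true := rfl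
  simp only [G, h, h1, h3, cond_true, cond_false]

lemma G_even (K m : ℕ) (h : m % 2 = 0) : G (K + 1) m = G K (m / 2) + 1 := by
  have h1 : Nat.beq (m % 4) 1 = false := by
    rw [← Bool.not_eq_true, Nat.beq_eq]; omega
  have h3 : Nat.beq (m % 4) 3 = false := by
    rw [← Bool.not_eq_true, Nat.beq_eq]; omega
  simp only [G, h1, h3, cond_false]

lemma G_le (K m : ℕ) : G K m ≤ 2 * K := by
  induction K generalizing m with
  | zero => simp [G]
  | succ K ih =>
    rcases (by omega : m % 4 = 1 ∨ m % 4 = 3 ∨ m % 2 = 0) with h | h | h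
    · rw [G_one K m h]; omega
    · rw [G_three K m h]; omega
    · rw [G_even K m h]; have := ih (m / 2); omega

lemma G_even_bounds (K m : ℕ) (h : m % 2 = 0) : 1 ≤ G (K + 1) m ∧ G (K + 1) m ≤ 2 * K + 1 := by
  rw [G_even K m h]; have := G_le K (m / 2); omega

lemma G_periodic (K m q : ℕ) : G K (m + 2 ^ (K + 1) * q) = G K m := by
  induction K generalizing m with
  | zero => simp [G]
  | succ K ih =>
    have e : 2 ^ (K + 1 + 1) * q = 4 * (2 ^ K * q) := by ring
    have e' : 2 ^ (K + 1) * q = 2 * (2 ^ K * q) := by ring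
    rcases (by omega : m % 4 = 1 ∨ m % 4 = 3 ∨ m % 2 = 0) with h | h | h
    · rw [G_one K m h, G_one K _ (by rw [e]; omega)]
    · rw [G_three K m h, G_three K _ (by rw [e]; omega)]
    · rw [G_even K m h, G_even K _ (by rw [e]; omega), ← ih (m / 2)]
      congr 2
      rw [e, e']; omega

lemma G_pow (b K m : ℕ) : G (K + b) (2 ^ b * m) = b + G K m := by
  induction b with
  | zero => simp
  | succ b ih =>
    have e : 2 ^ (b + 1) * m = 2 * (2 ^ b * m) := by ring
    rw [← Nat.add_assoc, G_even _ _ (by rw [e]; omega)]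
    have : 2 ^ (b + 1) * m / 2 = 2 ^ b * m := by rw [e]; omega
    rw [this, ih]; omega

/-! ## Basic facts about the codes and keys -/

lemma codeInf_head {w : ℕ} (h : w < 37) : codeInf w = headL.getD w 0 := by
  have : Nat.blt w 37 = true := by simpa using h
  simp only [codeInf, this, cond_true]

lemma codeInf_gen (m : ℕ) : codeInf (37 + m) = 800 + 20 * G 6 m := by
  have : Nat.blt (37 + m) 37 = false := by
    rw [← Bool.not_eq_true]; simp
  simp only [codeInf, this, cond_false, Nat.add_sub_cancel_left]

lemma code_inf {t j w : ℕ} (h : w < 37 + 8 * j) : code t j w = codeInf w := by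
  have : Nat.blt w (37 + 8 * j) = true := by simpa using h
  simp only [code, this, cond_true]

lemma code_tail (t j b : ℕ) : code t j (37 + 8 * j + b) = (tailL t).getD b 0 := by
  have : Nat.blt (37 + 8 * j + b) (37 + 8 * j) = false := by
    rw [← Bool.not_eq_true]; simp
  simp only [code, this, cond_false, Nat.add_sub_cancel_left]

lemma fine_le (t j w : ℕ) : fine t j w ≤ 2 * len t j := by
  unfold fine; split_ifs
  · exact G_le _ _
  · omega

lemma lex_lt {a b x y M : ℕ} (h : a < b) (hx : x < M) : a * M + x < b * M + y := by
  have : (a + 1) * M ≤ b * M := Nat.mul_le_mul_right _ h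
  have e : (a + 1) * M = a * M + M := by ring
  omega

lemma key_lt_of_code {t j a b : ℕ} (ha : a < len t j) (h : code t j a < code t j b) :
    key t j a < key t j b := by
  unfold key
  exact lex_lt (lex_lt h (by have := fine_le t j a; omega)) ha

lemma key_lt_of_fine {t j a b : ℕ} (ha : a < len t j) (h : code t j a = code t j b)
    (h' : fine t j a < fine t j b) : key t j a < key t j b := by
  unfold key
  exact lex_lt (by rw [h]; omega) ha

lemma key_inj {t j a b : ℕ} (ha : a < len t j) (hb : b < len t j)
    (h : key t j a = key t j b) : a = b := by
  have := congrArg (· % len t j) h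
  simpa [key, Nat.mul_add_mod_of_lt, Nat.mod_eq_of_lt ha, Nat.mod_eq_of_lt hb,
    Nat.add_mod] using this

lemma Valid.lt5 {t j : ℕ} (h : Valid t j) : t < 5 := by unfold Valid at h; omega

/-! ## Squares of functions on the naturals -/

/-- The window of `f` at `k` of half-length `ℓ` is a square. -/
def Sq (f : ℕ → ℕ) (k ℓ : ℕ) : Prop :=
  ∀ i j, i < ℓ → j < ℓ → (f (k + i) < f (k + j) ↔ f (k + ℓ + i) < f (k + ℓ + j))

/-- Boolean search for a strict violation. -/
def wit (s : ℕ → ℕ) (k ℓ : ℕ) : Bool :=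
  (List.range ℓ).any fun i => (List.range i).any fun j =>
    (Nat.blt (s (k + i)) (s (k + j)) && Nat.blt (s (k + ℓ + j)) (s (k + ℓ + i))) ||
    (Nat.blt (s (k + j)) (s (k + i)) && Nat.blt (s (k + ℓ + i)) (s (k + ℓ + j)))

lemma wit_sound {s : ℕ → ℕ} {k ℓ : ℕ} (h : wit s k ℓ = true) :
    ∃ i j, i < ℓ ∧ j < ℓ ∧ s (k + i) < s (k + j) ∧ s (k + ℓ + j) < s (k + ℓ + i) := by
  simp only [wit, List.any_eq_true, List.mem_range, Bool.or_eq_true, Bool.and_eq_true,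
    Nat.blt_eq] at h
  obtain ⟨i, hi, j, hj, h | h⟩ := h
  · exact ⟨i, j, hi, by omega, h.1, h.2⟩
  · exact ⟨j, i, by omega, hi, h.1, h.2⟩

/-- The same search, starting from the right end of the halves. -/
def witR (s : ℕ → ℕ) (k ℓ : ℕ) : Bool :=
  (List.range ℓ).any fun i => (List.range i).any fun j =>
    (Nat.blt (s (k + (ℓ - 1 - i))) (s (k + (ℓ - 1 - j))) &&
      Nat.blt (s (k + ℓ + (ℓ - 1 - j))) (s (k + ℓ + (ℓ - 1 - i)))) ||
    (Nat.blt (s (k + (ℓ - 1 - j))) (s (k + (ℓ - 1 - i))) &&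
      Nat.blt (s (k + ℓ + (ℓ - 1 - i))) (s (k + ℓ + (ℓ - 1 - j))))

lemma witR_sound {s : ℕ → ℕ} {k ℓ : ℕ} (h : witR s k ℓ = true) :
    ∃ i j, i < ℓ ∧ j < ℓ ∧ s (k + i) < s (k + j) ∧ s (k + ℓ + j) < s (k + ℓ + i) := by
  simp only [witR, List.any_eq_true, List.mem_range, Bool.or_eq_true, Bool.and_eq_true,
    Nat.blt_eq] at h
  obtain ⟨i, hi, j, hj, h | h⟩ := h
  · exact ⟨ℓ - 1 - i, ℓ - 1 - j, by omega, by omega, h.1, h.2⟩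
  · exact ⟨ℓ - 1 - j, ℓ - 1 - i, by omega, by omega, h.1, h.2⟩

lemma not_sq_of_key {t j k ℓ a b : ℕ} (hn : k + 2 * ℓ ≤ len t j)
    (ha : k ≤ a) (ha' : a < k + ℓ) (hb : k ≤ b) (hb' : b < k + ℓ)
    (h1 : key t j a < key t j b) (h2 : key t j (b + ℓ) < key t j (a + ℓ)) :
    ¬ Sq (key t j) k ℓ := by
  intro h
  have := h (a - k) (b - k) (by omega) (by omega)
  rw [show k + (a - k) = a by omega, show k + (b - k) = b by omega,
    show k + ℓ + (a - k) = a + ℓ by omega, show k + ℓ + (b - k) = b + ℓ by omega] at this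
  have := this.1 h1
  omega

lemma not_sq_of_code {t j k ℓ a b : ℕ} (hn : k + 2 * ℓ ≤ len t j)
    (ha : k ≤ a) (ha' : a < k + ℓ) (hb : k ≤ b) (hb' : b < k + ℓ)
    (h1 : code t j a < code t j b) (h2 : code t j (b + ℓ) < code t j (a + ℓ)) :
    ¬ Sq (key t j) k ℓ :=
  not_sq_of_key hn ha ha' hb hb' (key_lt_of_code (by omega) h1) (key_lt_of_code (by omega) h2)

lemma not_sq_of_wit {t j k ℓ : ℕ} (hn : k + 2 * ℓ ≤ len t j) (s : ℕ → ℕ) (k' : ℕ)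
    (hs : ∀ i, i < 2 * ℓ → code t j (k + i) = s (k' + i))
    (h : ∃ i j, i < ℓ ∧ j < ℓ ∧ s (k' + i) < s (k' + j) ∧ s (k' + ℓ + j) < s (k' + ℓ + i)) :
    ¬ Sq (key t j) k ℓ := by
  obtain ⟨a, b, ha, hb, h1, h2⟩ := h
  refine not_sq_of_code (a := k + a) (b := k + b) hn (by omega) (by omega) (by omega) (by omega)
    ?_ ?_
  · rw [hs a (by omega), hs b (by omega)]; exact h1
  · rw [show k + b + ℓ = k + (ℓ + b) by omega, show k + a + ℓ = k + (ℓ + a) by omega,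
      hs _ (by omega), hs _ (by omega), ← Nat.add_assoc, ← Nat.add_assoc]; exact h2

/-! ## The step pattern -/

lemma head_step : ∀ w < 36, (w % 4 < 2 → headL.getD w 0 < headL.getD (w + 1) 0) ∧
    (2 ≤ w % 4 → headL.getD (w + 1) 0 < headL.getD w 0) := by decide +kernel

lemma tail_step : ∀ t < 5, ∀ b < (tailL t).length - 1,
    ((b + 1) % 4 < 2 → (tailL t).getD b 0 < (tailL t).getD (b + 1) 0) ∧
    (2 ≤ (b + 1) % 4 → (tailL t).getD (b + 1) 0 < (tailL t).getD b 0) := by decide +kernel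

lemma tail_zero : ∀ t < 5, 1040 < (tailL t).getD 0 0 := by decide +kernel

lemma codeInf_step (w : ℕ) : (w % 4 < 2 → codeInf w < codeInf (w + 1)) ∧
    (2 ≤ w % 4 → codeInf (w + 1) < codeInf w) := by
  rcases Nat.lt_trichotomy w 36 with h | h | h
  · rw [codeInf_head (by omega), codeInf_head (by omega)]
    exact head_step w h
  · subst h; decide +kernel
  · obtain ⟨m, rfl⟩ : ∃ m, w = 37 + m := ⟨w - 37, by omega⟩
    rw [Nat.add_assoc, codeInf_gen, codeInf_gen]
    rcases (by omega : m % 4 = 0 ∨ m % 4 = 1 ∨ m % 4 = 2 ∨ m % 4 = 3) with h | h | h | h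
    · have a1 := G_even_bounds 5 m (by omega)
      have a2 := G_one 5 (m + 1) (by omega)
      simp only [Nat.reduceAdd] at a1 a2
      omega
    · have a1 := G_even_bounds 5 (m + 1) (by omega)
      have a2 := G_one 5 m (by omega)
      simp only [Nat.reduceAdd] at a1 a2
      omega
    · have a1 := G_even_bounds 5 m (by omega)
      have a2 := G_three 5 (m + 1) (by omega)
      simp only [Nat.reduceAdd] at a1 a2
      omega
    · have a1 := G_even_bounds 5 (m + 1) (by omega)
      have a2 := G_three 5 m (by omega)
      simp only [Nat.reduceAdd] at a1 a2
      omega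

lemma codeInf_le (w : ℕ) : codeInf w ≤ 1040 := by
  by_cases h : w < 37
  · rw [codeInf_head h]
    have : ∀ w < 37, headL.getD w 0 ≤ 1040 := by decide +kernel
    exact this w h
  · obtain ⟨m, rfl⟩ : ∃ m, w = 37 + m := ⟨w - 37, by omega⟩
    rw [codeInf_gen]; have := G_le 6 m; omega

lemma code_step {t j : ℕ} (ht : t < 5) (w : ℕ) (hw : w + 1 < len t j) :
    (w % 4 < 2 → code t j w < code t j (w + 1)) ∧
    (2 ≤ w % 4 → code t j (w + 1) < code t j w) := by
  rcases Nat.lt_trichotomy (w + 1) (37 + 8 * j) with h | h | h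
  · rw [code_inf (by omega), code_inf h]; exact codeInf_step w
  · rw [code_inf (by omega : w < 37 + 8 * j), h]
    have e := code_tail t j 0
    rw [Nat.add_zero] at e
    rw [e]
    have := tail_zero t ht
    have := codeInf_le w
    omega
  · obtain ⟨b, rfl⟩ : ∃ b, w = 37 + 8 * j + b := ⟨w - (37 + 8 * j), by omega⟩
    rw [Nat.add_assoc _ b 1, code_tail, code_tail]
    have := tail_step t ht b (by unfold len at hw; omega)
    constructor
    · intro h'; exact this.1 (by omega)
    · intro h'; exact this.2 (by omega)

lemma key_step_s2 {t j : ℕ} (ht : t < 5) (w : ℕ) (hw : w + 1 < len t j) :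
    key t j w < key t j (w + 1) ↔ w % 4 < 2 := by
  have := code_step ht w hw
  constructor
  · intro h
    by_contra h'
    have := key_lt_of_code (by omega) (this.2 (by omega))
    omega
  · intro h
    exact key_lt_of_code (by omega) (this.1 h)

lemma not_sq_mod4 {t j k ℓ : ℕ} (ht : t < 5) (h2 : 2 ≤ ℓ) (h4 : ℓ % 4 ≠ 0)
    (hn : k + 2 * ℓ ≤ len t j) : ¬ Sq (key t j) k ℓ := by
  intro h
  have h0 := h 0 1 (by omega) (by omega)
  have s0 := key_step_s2 (j := j) ht k (by omega)
  have s1 := key_step_s2 (j := j) ht (k + ℓ) (by omega)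
  simp only [Nat.add_zero] at h0
  rw [s0, s1] at h0
  by_cases h3 : ℓ = 2
  · omega
  have h1 := h 1 2 (by omega) (by omega)
  have s2 := key_step_s2 (j := j) ht (k + 1) (by omega)
  have s3 := key_step_s2 (j := j) ht (k + ℓ + 1) (by omega)
  simp only [Nat.add_assoc, Nat.reduceAdd] at h1 s2 s3
  rw [s2, s3] at h1
  omega

/-! ## Windows touching the tail -/

lemma tail_length : ∀ t < 5, (tailL t).length ≤ 17 := by decide +kernel

lemma code_feature {w : ℕ} (hw : w % 4 = 1) (h3 : 3 ≤ w) (h37 : w ≠ 37) :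
    codeInf w < codeInf (w - 3) := by
  by_cases h : w < 37
  · rw [codeInf_head h, codeInf_head (by omega)]
    have : ∀ w < 37, w % 4 = 1 → 3 ≤ w → headL.getD w 0 < headL.getD (w - 3) 0 := by
      decide +kernel
    exact this w h hw h3
  · obtain ⟨m, rfl⟩ : ∃ m, w = 37 + (m + 3) := ⟨w - 40, by omega⟩
    rw [show 37 + (m + 3) - 3 = 37 + m by omega, codeInf_gen, codeInf_gen]
    have a1 := G_even_bounds 5 (m + 3) (by omega)
    have a2 := G_one 5 m (by omega)
    simp only [Nat.reduceAdd] at a1 a2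
    omega

lemma not_sq_tail_long {t j k ℓ : ℕ} (ht : t < 5) (h24 : 24 ≤ ℓ) (h4 : ℓ % 4 = 0)
    (hn : k + 2 * ℓ ≤ len t j) (hy : 37 + 8 * j < k + 2 * ℓ) : ¬ Sq (key t j) k ℓ := by
  have hL := tail_length t ht
  have hn' : k + 2 * ℓ ≤ 37 + 8 * j + 17 := by unfold len at hn; omega
  by_cases h : 8 * j = ℓ
  · refine not_sq_of_code (a := 35) (b := 32) hn (by omega) (by omega) (by omega) (by omega) ?_ ?_
    · rw [code_inf (by omega), code_inf (by omega)]; decide +kernel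
    · rw [code_inf (by omega), code_inf (by omega)]
      obtain ⟨q, hq⟩ : ∃ q, ℓ = q + 5 := ⟨ℓ - 5, by omega⟩
      rw [hq, show 32 + (q + 5) = 37 + q by omega, show 35 + (q + 5) = 37 + (q + 3) by omega,
        codeInf_gen, codeInf_gen]
      have a1 := G_even_bounds 5 (q + 3) (by omega)
      have a2 := G_three 5 q (by omega)
      simp only [Nat.reduceAdd] at a1 a2
      omega
  · refine not_sq_of_code (a := 37 + 8 * j - ℓ) (b := 37 + 8 * j - ℓ - 3) hn
      (by omega) (by omega) (by omega) (by omega) ?_ ?_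
    · rw [code_inf (by omega), code_inf (by omega)]
      exact code_feature (by omega) (by omega) (by omega)
    · rw [show 37 + 8 * j - ℓ + ℓ = 37 + 8 * j + 0 by omega, code_tail, code_inf (by omega)]
      have := tail_zero t ht
      have := codeInf_le (37 + 8 * j - ℓ - 3 + ℓ)
      omega

/-- The finite check for short windows touching the tail. -/
def tailCheck (t j : ℕ) : Bool :=
  (List.range 5).all fun a => (List.range (tailL t).length).all fun e =>
    Nat.blt (37 + 8 * j + e + 1) (2 * (4 * a + 4)) ||
      witR (code t j) (37 + 8 * j + e + 1 - 2 * (4 * a + 4)) (4 * a + 4)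

lemma tailCheck_sound {t j k ℓ : ℕ} (h : tailCheck t j = true) (h0 : 0 < ℓ) (h4 : ℓ % 4 = 0)
    (h20 : ℓ ≤ 20) (hn : k + 2 * ℓ ≤ len t j) (hy : 37 + 8 * j < k + 2 * ℓ) :
    witR (code t j) k ℓ = true := by
  simp only [tailCheck, List.all_eq_true, List.mem_range, Bool.or_eq_true, Nat.blt_eq] at h
  have := h (ℓ / 4 - 1) (by omega) (k + 2 * ℓ - (37 + 8 * j) - 1) (by unfold len at hn; omega)
  rw [show 4 * (ℓ / 4 - 1) + 4 = ℓ by omega] at this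
  rcases this with h' | h'
  · omega
  · rwa [show 37 + 8 * j + (k + 2 * ℓ - (37 + 8 * j) - 1) + 1 - 2 * ℓ = k by omega] at h'

lemma tailCheck0 : ((List.range 21).all fun j => tailCheck 0 j) = true := by decide +kernel
lemma tailCheck1 : ((List.range 21).all fun j => tailCheck 1 j) = true := by decide +kernel
lemma tailCheck2 : ((List.range 21).all fun j => tailCheck 2 j) = true := by decide +kernel
lemma tailCheck3 : ((List.range 20).all fun j => tailCheck 3 (j + 1)) = true := by decide +kernel
lemma tailCheck4 : tailCheck 4 0 = true := by decide +kernel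

lemma tailCheck_valid {t j : ℕ} (h : Valid t j) (hj : j < 21) : tailCheck t j = true := by
  have c0 := tailCheck0
  have c1 := tailCheck1
  have c2 := tailCheck2
  have c3 := tailCheck3
  simp only [List.all_eq_true, List.mem_range] at c0 c1 c2 c3
  rcases h with h | ⟨rfl, h⟩ | ⟨rfl, rfl⟩
  · interval_cases t
    · exact c0 j hj
    · exact c1 j hj
    · exact c2 j hj
  · have := c3 (j - 1) (by omega)
    rwa [show j - 1 + 1 = j by omega] at this
  · exact tailCheck4

lemma code_shift (t j q w : ℕ) (hw : 37 ≤ w) :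
    code t (j + 16 * q) (w + 128 * q) = code t j w := by
  by_cases h : w < 37 + 8 * j
  · rw [code_inf h, code_inf (by omega)]
    obtain ⟨m, rfl⟩ : ∃ m, w = 37 + m := ⟨w - 37, by omega⟩
    rw [Nat.add_assoc, codeInf_gen, codeInf_gen]
    have := G_periodic 6 m q
    norm_num at this
    rw [this]
  · obtain ⟨b, rfl⟩ : ∃ b, w = 37 + 8 * j + b := ⟨w - (37 + 8 * j), by omega⟩
    rw [show 37 + 8 * j + b + 128 * q = 37 + 8 * (j + 16 * q) + b by ring, code_tail, code_tail]

lemma not_sq_tail_short {t j k ℓ : ℕ} (hv : Valid t j) (h0 : 0 < ℓ) (h4 : ℓ % 4 = 0)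
    (h20 : ℓ ≤ 20) (hn : k + 2 * ℓ ≤ len t j) (hy : 37 + 8 * j < k + 2 * ℓ) :
    ¬ Sq (key t j) k ℓ := by
  by_cases hj : j < 21
  · exact not_sq_of_wit hn (code t j) k (fun _ _ => rfl)
      (witR_sound <| tailCheck_sound (tailCheck_valid hv hj) h0 h4 h20 hn hy)
  · obtain ⟨q, j', hq, h5, h21⟩ : ∃ q j', j = j' + 16 * q ∧ 5 ≤ j' ∧ j' < 21 :=
      ⟨(j - 5) / 16, 5 + (j - 5) % 16, by omega, by omega, by omega⟩
    subst hq
    have hv' : Valid t j' := by unfold Valid at hv ⊢; omega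
    obtain ⟨k', rfl⟩ : ∃ k', k = k' + 128 * q := ⟨k - 128 * q, by omega⟩
    refine not_sq_of_wit hn (code t j') k' ?_
      (witR_sound <| tailCheck_sound (tailCheck_valid hv' h21) h0 h4 h20 (by unfold len at *; omega) (by omega))
    intro i hi
    rw [show k' + 128 * q + i = (k' + i) + 128 * q by omega]
    exact code_shift t j' q (k' + i) (by omega)

/-! ## Windows not touching the tail -/

lemma headCheck : ((List.range 37).all fun k => (List.range 25).all fun a =>
    wit codeInf k (4 * a + 4)) = true := by decide +kernel

lemma not_sq_head {t j k ℓ : ℕ} (hk : k < 37) (h0 : 0 < ℓ) (h4 : ℓ % 4 = 0) (h100 : ℓ ≤ 100)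
    (hn : k + 2 * ℓ ≤ len t j) (hy : k + 2 * ℓ ≤ 37 + 8 * j) : ¬ Sq (key t j) k ℓ := by
  have c := headCheck
  simp only [List.all_eq_true, List.mem_range] at c
  have := c k hk (ℓ / 4 - 1) (by omega)
  rw [show 4 * (ℓ / 4 - 1) + 4 = ℓ by omega] at this
  exact not_sq_of_wit hn codeInf k (fun i hi => code_inf (by omega)) (wit_sound this)

lemma key_gen_lt {t j b u v : ℕ} (hb : b < len t j) (hu : 37 + 2 ^ b * u < 37 + 8 * j)
    (hv : 37 + 2 ^ b * v < 37 + 8 * j)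
    (h : ∀ K, G (K + 1) u < G (K + 1) v) :
    key t j (37 + 2 ^ b * u) < key t j (37 + 2 ^ b * v) := by
  have hlen : 37 + 8 * j ≤ len t j := by unfold len; omega
  by_cases h6 : b < 6
  · apply key_lt_of_code (by omega)
    rw [code_inf hu, code_inf hv, codeInf_gen, codeInf_gen]
    obtain ⟨K, hK⟩ : ∃ K, 6 = K + 1 + b := ⟨5 - b, by omega⟩
    rw [hK, G_pow, G_pow]
    have := h K
    omega
  · apply key_lt_of_fine (by omega)
    · rw [code_inf hu, code_inf hv, codeInf_gen, codeInf_gen]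
      obtain ⟨c, rfl⟩ : ∃ c, b = 6 + c := ⟨b - 6, by omega⟩
      have e1 := G_pow 6 0 (2 ^ c * u)
      have e2 := G_pow 6 0 (2 ^ c * v)
      rw [Nat.zero_add] at e1 e2
      rw [pow_add, Nat.mul_assoc, Nat.mul_assoc, e1, e2]
      rfl
    · unfold fine
      rw [if_pos hu, if_pos hv, Nat.add_sub_cancel_left, Nat.add_sub_cancel_left]
      obtain ⟨K, hK⟩ : ∃ K, len t j = K + 1 + b := ⟨len t j - 1 - b, by omega⟩
      rw [hK, G_pow, G_pow]
      have := h K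
      omega

/-- Shifting by twice an odd number flips the comparison of neighbours. -/
lemma G_flip (t c : ℕ) (hc : c % 2 = 1) :
    ((∀ K, G (K + 1) t < G (K + 1) (t + 1)) ∧
      (∀ K, G (K + 1) (t + 2 * c + 1) < G (K + 1) (t + 2 * c))) ∨
    ((∀ K, G (K + 1) (t + 1) < G (K + 1) t) ∧
      (∀ K, G (K + 1) (t + 2 * c) < G (K + 1) (t + 2 * c + 1))) := by
  rcases (by omega : t % 4 = 0 ∨ t % 4 = 1 ∨ t % 4 = 2 ∨ t % 4 = 3) with h | h | h | h
  · left
    constructor <;> intro K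
    · have a1 := G_even_bounds K t (by omega)
      have a2 := G_one K (t + 1) (by omega)
      omega
    · have a3 := G_even_bounds K (t + 2 * c) (by omega)
      have a4 := G_three K (t + 2 * c + 1) (by omega)
      omega
  · right
    constructor <;> intro K
    · have a1 := G_even_bounds K (t + 1) (by omega)
      have a2 := G_one K t (by omega)
      omega
    · have a3 := G_even_bounds K (t + 2 * c + 1) (by omega)
      have a4 := G_three K (t + 2 * c) (by omega)
      omega
  · right
    constructor <;> intro K
    · have a1 := G_even_bounds K t (by omega)
      have a2 := G_three K (t + 1) (by omega)
      omega
    · have a3 := G_even_bounds K (t + 2 * c) (by omega)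
      have a4 := G_one K (t + 2 * c + 1) (by omega)
      omega
  · left
    constructor <;> intro K
    · have a1 := G_even_bounds K (t + 1) (by omega)
      have a2 := G_three K t (by omega)
      omega
    · have a3 := G_even_bounds K (t + 2 * c + 1) (by omega)
      have a4 := G_one K (t + 2 * c) (by omega)
      omega

lemma not_sq_gen {t j k ℓ : ℕ} (h0 : 0 < ℓ) (h4 : ℓ % 4 = 0) (hk : 37 ≤ k ∨ 101 ≤ ℓ)
    (hy : k + 2 * ℓ ≤ 37 + 8 * j) : ¬ Sq (key t j) k ℓ := by
  have hlen : 37 + 8 * j ≤ len t j := by unfold len; omega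
  obtain ⟨b, c, hc, hbc⟩ := Nat.exists_eq_two_pow_mul_odd (n := ℓ / 2) (by omega)
  have hc2 : c % 2 = 1 := Nat.odd_iff.1 hc
  have hd : 0 < 2 ^ b := by positivity
  have hbd : b < 2 ^ b := Nat.lt_two_pow_self
  have hle : 2 ^ b ≤ ℓ / 2 := by
    rw [hbc]; exact Nat.le_mul_of_pos_right _ (by omega)
  have hl : ℓ = 2 ^ b * (2 * c) := by
    have : 2 ^ b * (2 * c) = 2 * (2 ^ b * c) := by ring
    omega
  obtain ⟨u, hu1, hu2⟩ : ∃ u, k ≤ 37 + 2 ^ b * u ∧ 37 + 2 ^ b * (u + 1) < k + ℓ := by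
    by_cases h37 : 37 ≤ k
    · refine ⟨(k - 37 + (2 ^ b - 1)) / 2 ^ b, ?_, ?_⟩
      · have e1 := Nat.div_add_mod (k - 37 + (2 ^ b - 1)) (2 ^ b)
        have e2 := Nat.mod_lt (k - 37 + (2 ^ b - 1)) hd
        omega
      · have e1 := Nat.div_add_mod (k - 37 + (2 ^ b - 1)) (2 ^ b)
        rw [Nat.mul_add, Nat.mul_one]
        omega
    · exact ⟨0, by omega, by omega⟩
  have hu3 : 2 ^ b * (u + 1) = 2 ^ b * u + 2 ^ b := by ring
  have s1 : 37 + 2 ^ b * u + ℓ = 37 + 2 ^ b * (u + 2 * c) := by rw [hl]; ring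
  have s2 : 37 + 2 ^ b * (u + 1) + ℓ = 37 + 2 ^ b * (u + 2 * c + 1) := by rw [hl]; ring
  rcases G_flip u c hc2 with ⟨h1, h2⟩ | ⟨h1, h2⟩
  · refine not_sq_of_key (a := 37 + 2 ^ b * u) (b := 37 + 2 ^ b * (u + 1)) (by omega)
      (by omega) (by omega) (by omega) (by omega) ?_ ?_
    · exact key_gen_lt (by omega) (by omega) (by omega) h1
    · rw [s1, s2]; exact key_gen_lt (by omega) (by omega) (by omega) h2
  · refine not_sq_of_key (a := 37 + 2 ^ b * (u + 1)) (b := 37 + 2 ^ b * u) (by omega)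
      (by omega) (by omega) (by omega) (by omega) ?_ ?_
    · exact key_gen_lt (by omega) (by omega) (by omega) h1
    · rw [s1, s2]; exact key_gen_lt (by omega) (by omega) (by omega) h2

lemma not_sq {t j k ℓ : ℕ} (hv : Valid t j) (h2 : 2 ≤ ℓ) (hn : k + 2 * ℓ ≤ len t j) :
    ¬ Sq (key t j) k ℓ := by
  have ht := hv.lt5
  by_cases h4 : ℓ % 4 = 0
  · by_cases hy : k + 2 * ℓ ≤ 37 + 8 * j
    · by_cases hk : 37 ≤ k ∨ 101 ≤ ℓ
      · exact not_sq_gen (by omega) h4 hk hy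
      · exact not_sq_head (by omega) (by omega) h4 (by omega) hn hy
    · by_cases h24 : 24 ≤ ℓ
      · exact not_sq_tail_long ht h24 h4 hn (by omega)
      · exact not_sq_tail_short hv (by omega) h4 (by omega) hn (by omega)
  · exact not_sq_mod4 ht h2 h4 hn

/-! ## Cruciality -/

/-- A set of positions that is downward closed for the values is cut out by a threshold. -/
lemma exists_slot (h : ℕ → ℕ) (N : ℕ) (P : ℕ → Prop)
    (hP : ∀ a < N, ∀ b < N, h a ≤ h b → P b → P a) :
    ∃ c, (c = 0 ∨ ∃ b < N, c = h b + 1) ∧ ∀ a < N, (P a ↔ h a < c) := by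
  classical
  by_cases hne : ((Finset.range N).filter P).Nonempty
  · obtain ⟨b, hb, hmax⟩ := Finset.exists_max_image _ h hne
    simp only [Finset.mem_filter, Finset.mem_range] at hb hmax
    refine ⟨h b + 1, Or.inr ⟨b, hb.1, rfl⟩, fun a ha => ⟨fun hpa => ?_, fun hlt => ?_⟩⟩
    · have := hmax a ⟨ha, hpa⟩; omega
    · exact hP a ha b hb.1 (by omega) hb.2
  · refine ⟨0, Or.inl rfl, fun a ha => ⟨fun hpa => ?_, fun hlt => by omega⟩⟩
    exact absurd ⟨a, by simp [ha, hpa]⟩ hne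

/-- Boolean test for a square. -/
def sqB (s : ℕ → ℕ) (k ℓ : ℕ) : Bool :=
  (List.range ℓ).all fun i => (List.range ℓ).all fun j =>
    Nat.blt (s (k + i)) (s (k + j)) == Nat.blt (s (k + ℓ + i)) (s (k + ℓ + j))

lemma sqB_sound {s : ℕ → ℕ} {k ℓ : ℕ} (h : sqB s k ℓ = true) : Sq s k ℓ := by
  simp only [sqB, List.all_eq_true, List.mem_range, beq_iff_eq] at h
  intro i j hi hj
  have := h i hi j hj
  rw [← Nat.blt_eq, ← Nat.blt_eq, this]

/-- The head, preceded by a new entry in the slot `c`. -/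
def leftVal (c i : ℕ) : ℕ :=
  bif Nat.beq i 0 then 2 * c else 2 * headL.getD (i - 1) 0 + 1

/-- The tail, followed by a new entry in the slot `c`. -/
def rightVal (t c i : ℕ) : ℕ :=
  bif Nat.blt i (tailL t).length then 2 * (tailL t).getD i 0 + 1 else 2 * c

/-- There is a short square at the left end. -/
def leftCheck (c : ℕ) : Bool :=
  sqB (leftVal c) 0 2 || sqB (leftVal c) 0 4 || sqB (leftVal c) 0 8 || sqB (leftVal c) 0 16

/-- There is a short square at the right end. -/
def rightCheck (t c : ℕ) : Bool :=
  sqB (rightVal t c) ((tailL t).length + 1 - 4) 2 ||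
  sqB (rightVal t c) ((tailL t).length + 1 - 8) 4 ||
  (Nat.blt 14 (tailL t).length && sqB (rightVal t c) ((tailL t).length + 1 - 16) 8)

lemma leftCheck_all : leftCheck 0 = true ∧
    ∀ b < 37, leftCheck (headL.getD b 0 + 1) = true := by decide +kernel

lemma rightCheck_all : ∀ t < 5, rightCheck t 0 = true ∧
    ∀ b < (tailL t).length, rightCheck t ((tailL t).getD b 0 + 1) = true := by decide +kernel

lemma head_inj : ∀ a < 37, ∀ b < 37, headL.getD a 0 = headL.getD b 0 → a = b := by
  decide +kernel

lemma tail_inj : ∀ t < 5, ∀ a < (tailL t).length, ∀ b < (tailL t).length,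
    (tailL t).getD a 0 = (tailL t).getD b 0 → a = b := by decide +kernel

lemma key_lt_iff_of_inj {t j a b : ℕ} (ha : a < len t j) (hb : b < len t j)
    (h : code t j a = code t j b → a = b) :
    key t j a < key t j b ↔ code t j a < code t j b := by
  constructor
  · intro hk
    by_contra hc
    rcases Nat.lt_or_eq_of_le (Nat.le_of_not_lt hc) with h1 | h1
    · have := key_lt_of_code hb h1; omega
    · have := h h1.symm; subst this; omega
  · exact key_lt_of_code ha

lemma key_head {t j a b : ℕ} (ha : a < 37) (hb : b < 37) :
    key t j a < key t j b ↔ headL.getD a 0 < headL.getD b 0 := by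
  have hl : 37 ≤ len t j := by unfold len; omega
  have ea : code t j a = headL.getD a 0 := by rw [code_inf (by omega), codeInf_head ha]
  have eb : code t j b = headL.getD b 0 := by rw [code_inf (by omega), codeInf_head hb]
  rw [← ea, ← eb]
  apply key_lt_iff_of_inj (by omega) (by omega)
  rw [ea, eb]
  exact head_inj a ha b hb

lemma key_tail {t j a b : ℕ} (ht : t < 5) (ha : a < (tailL t).length)
    (hb : b < (tailL t).length) :
    key t j (37 + 8 * j + a) < key t j (37 + 8 * j + b) ↔
      (tailL t).getD a 0 < (tailL t).getD b 0 := by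
  rw [← code_tail t j a, ← code_tail t j b]
  apply key_lt_iff_of_inj (by unfold len; omega) (by unfold len; omega)
  rw [code_tail, code_tail]
  intro h
  rw [tail_inj t ht a ha b hb h]

lemma left_square {t j : ℕ} (g : ℕ → ℕ) (hinj : ∀ i, i < len t j → g (i + 1) ≠ g 0)
    (hg : ∀ a b, a < len t j → b < len t j →
      (g (a + 1) < g (b + 1) ↔ key t j a < key t j b)) :
    ∃ ℓ, 2 ≤ ℓ ∧ 2 * ℓ ≤ len t j + 1 ∧ Sq g 0 ℓ := by
  have hl : 37 ≤ len t j := by unfold len; omega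
  have hg' : ∀ a b, a < 37 → b < 37 →
      (g (a + 1) < g (b + 1) ↔ headL.getD a 0 < headL.getD b 0) := fun a b ha hb => by
    rw [hg a b (by omega) (by omega), key_head ha hb]
  obtain ⟨c, hc, hslot⟩ := exists_slot (fun a => headL.getD a 0) 37 (fun a => g (a + 1) < g 0)
    (fun a ha b hb hab hb0 => by
      have := (hg' b a hb ha).not.2 (by simpa using hab)
      omega)
  have hval : ∀ a b, a < 38 → b < 38 → (g a < g b ↔ leftVal c a < leftVal c b) := by
    intro a b ha hb
    rcases a with _ | a <;> rcases b with _ | b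
    · simp
    · have h1 := hslot b (by omega)
      have h2 := hinj b (by omega)
      have e0 : leftVal c 0 = 2 * c := rfl
      have e1 : leftVal c (b + 1) = 2 * headL.getD b 0 + 1 := rfl
      rw [e0, e1]
      constructor
      · intro h
        have := h1.not.1 (by omega)
        omega
      · intro h
        have := h1.not.2 (by omega)
        omega
    · have h1 := hslot a (by omega)
      have e0 : leftVal c 0 = 2 * c := rfl
      have e1 : leftVal c (a + 1) = 2 * headL.getD a 0 + 1 := rfl
      rw [e0, e1, h1]
      omega
    · have e1 : leftVal c (a + 1) = 2 * headL.getD a 0 + 1 := rfl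
      have e2 : leftVal c (b + 1) = 2 * headL.getD b 0 + 1 := rfl
      rw [e1, e2, hg' a b (by omega) (by omega)]
      omega
  have hchk : leftCheck c = true := by
    rcases hc with rfl | ⟨b, hb, rfl⟩
    · exact leftCheck_all.1
    · exact leftCheck_all.2 b hb
  have key : ∀ ℓ, ℓ ≤ 16 → sqB (leftVal c) 0 ℓ = true → Sq g 0 ℓ := by
    intro ℓ hℓ h i j hi hj
    rw [hval _ _ (by omega) (by omega), hval _ _ (by omega) (by omega)]
    exact sqB_sound h i j hi hj
  simp only [leftCheck, Bool.or_eq_true] at hchk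
  rcases hchk with ((h | h) | h) | h
  · exact ⟨2, by omega, by omega, key _ (by omega) h⟩
  · exact ⟨4, by omega, by omega, key _ (by omega) h⟩
  · exact ⟨8, by omega, by omega, key _ (by omega) h⟩
  · exact ⟨16, by omega, by omega, key _ (by omega) h⟩

lemma tail_length_ge : ∀ t < 5, 11 ≤ (tailL t).length := by decide +kernel

lemma right_square {t j : ℕ} (ht : t < 5) (g : ℕ → ℕ)
    (hinj : ∀ i, i < len t j → g i ≠ g (len t j))
    (hg : ∀ a b, a < len t j → b < len t j → (g a < g b ↔ key t j a < key t j b)) :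
    ∃ k ℓ, 2 ≤ ℓ ∧ k + 2 * ℓ ≤ len t j + 1 ∧ Sq g k ℓ := by
  have hlen : len t j = 37 + 8 * j + (tailL t).length := rfl
  have h11 := tail_length_ge t ht
  set L := (tailL t).length with hL
  set y := 37 + 8 * j with hy
  have hg' : ∀ a b, a < L → b < L →
      (g (y + a) < g (y + b) ↔ (tailL t).getD a 0 < (tailL t).getD b 0) := fun a b ha hb => by
    rw [hg (y + a) (y + b) (by omega) (by omega), key_tail ht ha hb]
  obtain ⟨c, hc, hslot⟩ := exists_slot (fun a => (tailL t).getD a 0) L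
    (fun a => g (y + a) < g (y + L))
    (fun a ha b hb hab hb0 => by
      have := (hg' b a hb ha).not.2 (by simpa using hab)
      omega)
  have e0 : rightVal t c L = 2 * c := by
    have : Nat.blt L L = false := by rw [← Bool.not_eq_true]; simp
    simp only [rightVal, ← hL, this, cond_false]
  have e1 : ∀ a < L, rightVal t c a = 2 * (tailL t).getD a 0 + 1 := by
    intro a ha
    have : Nat.blt a L = true := by simpa using ha
    simp only [rightVal, ← hL, this, cond_true]
  have hval : ∀ a b, a ≤ L → b ≤ L →
      (g (y + a) < g (y + b) ↔ rightVal t c a < rightVal t c b) := by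
    intro a b ha hb
    rcases Nat.lt_or_eq_of_le ha with ha | rfl <;> rcases Nat.lt_or_eq_of_le hb with hb | hb
    · rw [e1 a ha, e1 b hb, hg' a b ha hb]; omega
    · subst hb
      have h1 := hslot a (by omega)
      rw [e0, e1 a ha, h1]
      omega
    · have h1 := hslot b (by omega)
      have h2 := hinj (y + b) (by omega)
      rw [hlen] at h2
      rw [e0, e1 b hb]
      constructor
      · intro h
        have := h1.not.1 (by omega)
        omega
      · intro h
        have := h1.not.2 (by omega)
        omega
    · subst hb; simp
  have hchk : rightCheck t c = true := by
    rcases hc with rfl | ⟨b, hb, rfl⟩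
    · exact (rightCheck_all t ht).1
    · exact (rightCheck_all t ht).2 b hb
  have key : ∀ k ℓ, k + 2 * ℓ ≤ L + 1 → sqB (rightVal t c) k ℓ = true → Sq g (y + k) ℓ := by
    intro k ℓ hℓ h i j hi hj
    have := sqB_sound h i j hi hj
    rw [← hval _ _ (by omega) (by omega), ← hval _ _ (by omega) (by omega)] at this
    simpa only [Nat.add_assoc] using this
  simp only [rightCheck, Bool.or_eq_true, Bool.and_eq_true, Nat.blt_eq, ← hL] at hchk
  rcases hchk with (h | h) | ⟨h', h⟩
  · exact ⟨_, 2, by omega, by omega, key _ _ (by omega) h⟩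
  · exact ⟨_, 4, by omega, by omega, key _ _ (by omega) h⟩
  · exact ⟨_, 8, by omega, by omega, key _ _ (by omega) h⟩

/-! ## Assembling -/

lemma exists_ranking {n : ℕ} (f : Fin n → ℕ) (hf : Function.Injective f) :
    ∃ σ : Equiv.Perm (Fin n), ∀ i j, σ i < σ j ↔ f i < f j := by
  have hm : StrictMono (f ∘ Tuple.sort f) :=
    (Tuple.monotone_sort f).strictMono_of_injective (hf.comp (Tuple.sort f).injective)
  refine ⟨(Tuple.sort f)⁻¹, fun i j => ?_⟩
  rw [← hm.lt_iff_lt]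
  simp

/-- Extend a permutation to a function on the naturals. -/
def toFun {n : ℕ} (π : Fin n → Fin n) (i : ℕ) : ℕ := if h : i < n then (π ⟨i, h⟩ : ℕ) else 0

lemma toFun_lt {n : ℕ} (π : Fin n → Fin n) (a b : ℕ) (ha : a < n) (hb : b < n) :
    toFun π a < toFun π b ↔ π ⟨a, ha⟩ < π ⟨b, hb⟩ := by
  simp [toFun, ha, hb]

lemma hasSquareAt_of_sq {n k ℓ : ℕ} (π : Fin n → Fin n) (h2 : 2 ≤ ℓ) (hn : k + 2 * ℓ ≤ n)
    (h : Sq (toFun π) k ℓ) : HasSquareAt π k ℓ := by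
  refine ⟨h2, hn, fun i j hi hj => ?_⟩
  rw [← toFun_lt, ← toFun_lt]
  exact h i j hi hj

lemma toFun_ne {n : ℕ} (π : Equiv.Perm (Fin n)) (a b : ℕ) (ha : a < n) (hb : b < n)
    (hab : a ≠ b) : toFun π a ≠ toFun π b := by
  simp only [toFun, ha, hb, dif_pos]
  intro h
  have := π.injective (Fin.ext h)
  exact hab (congrArg Fin.val this)

lemma exists_bicrucial {t j : ℕ} (hv : Valid t j) :
    ∃ σ : Equiv.Perm (Fin (len t j)), Bicrucial σ := by
  obtain ⟨σ, hσ⟩ := exists_ranking (fun i : Fin (len t j) => key t j i)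
    (fun a b h => Fin.ext (key_inj a.2 b.2 h))
  have hsf : SquareFree ⇑σ := by
    rintro ⟨k, ℓ, h2, hn, h⟩
    refine not_sq hv h2 hn (fun i j' hi hj => ?_)
    have := h i j' hi hj
    rwa [hσ, hσ] at this
  refine ⟨σ, ⟨hsf, fun π hπ => ?_⟩, ⟨hsf, fun π hπ => ?_⟩⟩
  · obtain ⟨ℓ, h2, hn, h⟩ := left_square (t := t) (j := j) (toFun π)
      (fun i hi => toFun_ne π _ _ (by omega) (by omega) (by omega))
      (fun a b ha hb => by
        rw [toFun_lt π _ _ (by omega) (by omega)]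
        have := hπ ⟨a, ha⟩ ⟨b, hb⟩
        rw [hσ] at this
        exact this)
    exact ⟨0, ℓ, hasSquareAt_of_sq _ h2 (by omega) h⟩
  · obtain ⟨k, ℓ, h2, hn, h⟩ := right_square (t := t) (j := j) hv.lt5 (toFun π)
      (fun i hi => toFun_ne π _ _ (by omega) (by omega) (by omega))
      (fun a b ha hb => by
        rw [toFun_lt π _ _ (by omega) (by omega)]
        have := hπ ⟨a, ha⟩ ⟨b, hb⟩
        rw [hσ] at this
        exact this)
    exact ⟨k, ℓ, hasSquareAt_of_sq _ h2 hn h⟩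

lemma exists_params (n : ℕ) (hn : Even n) (h48 : 48 ≤ n) : ∃ t j, Valid t j ∧ len t j = n := by
  have hn2 : n % 2 = 0 := Nat.even_iff.1 hn
  have l0 : (tailL 0).length = 11 := rfl
  have l1 : (tailL 1).length = 13 := rfl
  have l2 : (tailL 2).length = 15 := rfl
  have l3 : (tailL 3).length = 17 := rfl
  have l4 : (tailL 4).length = 17 := rfl
  rcases (by omega : n % 8 = 0 ∨ n % 8 = 2 ∨ n % 8 = 4 ∨ n % 8 = 6) with h | h | h | h
  · exact ⟨0, (n - 48) / 8, by unfold Valid; omega, by unfold len; omega⟩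
  · exact ⟨1, (n - 48) / 8, by unfold Valid; omega, by unfold len; omega⟩
  · exact ⟨2, (n - 48) / 8, by unfold Valid; omega, by unfold len; omega⟩
  · by_cases h54 : n = 54
    · exact ⟨4, 0, by unfold Valid; omega, by unfold len; omega⟩
    · exact ⟨3, (n - 48) / 8, by unfold Valid; omega, by unfold len; omega⟩

/-- For every even integer `n ≥ 48`, there exists a bicrucial permutation of length `n`. -/
theorem bicrucial_exists_even (n : ℕ) (hn : Even n) (h48 : 48 ≤ n) :
    ∃ σ : Equiv.Perm (Fin n), Bicrucial σ := by
  obtain ⟨t, j, hv, rfl⟩ := exists_params n hn h48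
  exact exists_bicrucial hv
end
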